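/- Every subgroup of a right-angled Artin group G(Γ) (Γ a finite simple graph) that is generated by two elements is either abelian or isomorphic to a free group. -/

import Mathlib

/-!
The theorem is proved by induction on the number of vertices, inside the class `TwoFree` of groups
with unique roots in which any two elements either commute or freely generate a free group.

**Inductive step.** Fix a vertex `v`, let `B = G(Γ - v)`, and let `C ≤ B` be generated by the
vertices commuting with `v`. Conjugates of `v` by elements of `B` depend only on cosets of `C`, and
`G(Γ)` embeds into `FreeGroup (B ⧸ C) ⋊ B`, with `B` permuting the basis (`raagSplit_injective`).
Since `C` is a retract of `B` and `B` has unique roots, stabilizers of basis elements are closed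
under roots. It therefore suffices that `TwoFree` passes from `K` to `FreeGroup X ⋊ K` for every
such root-closed permutation action (`TwoFree.wp`). A pair of elements whose images in `K` are free
is free. If the images commute, the acting group may be replaced by `ℤ²` (`good_of_pullback`), and
the basis elements fixed by all of `ℤ²` can be absorbed into the acting group (`peel`), where the
alternative for ordinary free groups decides whether the pair is already free or the new acting
elements again commute (`good_of_commute_right`). So one may assume that `ℤ²` fixes no basis element.

**The commuting case.** The tool is the Magnus expansion `x ↦ 1 + x` into noncommutative power
series. A family in a free group whose leading homogeneous parts are linearly independent is a free
basis of the subgroup it generates (`lift_injective_of_indep`). When an abelian group `A` for which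
`ℤ[A]` is a domain permutes the basis, the translates of an element have independent leading parts
unless a nontrivial element of `A` fixes all letters of a leading word (`orbit_indep`); so these
translates, even after conjugation, are free generators (`orbit_free`). Apply this to the
commutator of noncommuting `a, b` lying over a basis of `ℤ²`. If a leading word has trivial
stabilizer, the conjugates of the commutator by `aⁱ bʲ` are free, and the normal form of words in a
free group of rank two modulo its commutator subgroup shows that `a, b` are free
(`freePair_rank_two`). Otherwise some `k ≠ 1` in `ℤ²` fixes the leading word; restricted to the basis
elements fixed by `k`, all stabilizers coincide with the line of `k`, and the Euclidean algorithm
reduces to the case of one acting generator (`freePair_of_char`). Unique roots in `FreeGroup X ⋊ K`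
follow from the same independence statement (`torsionFree_wp`).
-/

/-! Right-angled Artin groups in the "opposite" convention:
generators are vertices, and two generators commute iff the vertices are NOT adjacent. -/

/-- The commutation relators for the right-angled Artin group (opposite convention):
one commutator for each pair of distinct non-adjacent vertices. -/
def raagRels {V : Type*} (Γ : SimpleGraph V) : Set (FreeGroup V) :=
  {r | ∃ u v : V, u ≠ v ∧ ¬ Γ.Adj u v ∧
    r = FreeGroup.of u * FreeGroup.of v * (FreeGroup.of u)⁻¹ * (FreeGroup.of v)⁻¹}

/-- The right-angled Artin group `G(Γ)` (opposite convention). -/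
abbrev Raag {V : Type*} (Γ : SimpleGraph V) : Type _ := PresentedGroup (raagRels Γ)

/-- The vertex generators of `G(Γ)`. -/
abbrev Raag.of {V : Type*} (Γ : SimpleGraph V) (v : V) : Raag Γ := PresentedGroup.of v

/-- The element of `G(Γ)` represented by a word: a list of letters, where the letter `(v, b)`
stands for `v` if `b = true` and for `v⁻¹` if `b = false`. -/
def wordProd {V : Type*} (Γ : SimpleGraph V) (w : List (V × Bool)) : Raag Γ :=
  (w.map fun l => if l.2 then Raag.of Γ l.1 else (Raag.of Γ l.1)⁻¹).prod

/-- A word is reduced if no shorter word represents the same element of `G(Γ)`. -/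
def IsReducedWord {V : Type*} (Γ : SimpleGraph V) (w : List (V × Bool)) : Prop :=
  ∀ w' : List (V × Bool), wordProd Γ w' = wordProd Γ w → w.length ≤ w'.length

/-- The word length of `g` with respect to a generating set `S` of a group:
the least length of a list of elements of `S ∪ S⁻¹` whose product is `g`. -/
noncomputable def wordLength {G : Type*} [Group G] (S : Set G) (g : G) : ℕ :=
  sInf {n | ∃ l : List G, (∀ x ∈ l, x ∈ S ∨ x⁻¹ ∈ S) ∧ l.prod = g ∧ l.length = n}

/-- The (right-invariant) word metric associated to a generating set. -/
noncomputable def wordDist {G : Type*} [Group G] (S : Set G) (x y : G) : ℝ :=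
  (wordLength S (y * x⁻¹) : ℝ)

/-- Word length in `G(Γ)` with respect to the vertex generating set. -/
noncomputable def raagNorm {V : Type*} (Γ : SimpleGraph V) (g : Raag Γ) : ℕ :=
  wordLength (Set.range (Raag.of Γ)) g

/-- The word metric on `G(Γ)` with respect to the vertex generating set. -/
noncomputable def raagDist {V : Type*} (Γ : SimpleGraph V) (x y : Raag Γ) : ℝ :=
  wordDist (Set.range (Raag.of Γ)) x y

/-- A quasi-isometric group embedding: an injective group homomorphism which
is a quasi-isometric embedding with respect to the given metrics. -/
def IsQIEmbedding {G H : Type*} [Group G] [Group H] (f : G →* H)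
    (dG : G → G → ℝ) (dH : H → H → ℝ) : Prop :=
  Function.Injective f ∧ ∃ C : ℝ, 1 ≤ C ∧ ∀ x y : G,
    dG x y / C - C ≤ dH (f x) (f y) ∧ dH (f x) (f y) ≤ C * dG x y + C

/-- The support of `g ∈ G(Γ)`: vertices occurring in some reduced word representing `g`. -/
def raagSupp {V : Type*} (Γ : SimpleGraph V) (g : Raag Γ) : Set V :=
  {v | ∃ w : List (V × Bool), IsReducedWord Γ w ∧ wordProd Γ w = g ∧ ∃ b, (v, b) ∈ w}

/-- A cancellation of the vertex `v` in the word `w`: a subword `v^{±1} w' v^{∓1}` where the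
support of the element represented by `w'` is disjoint from the link of `v`. -/
def HasCancellationOf {V : Type*} (Γ : SimpleGraph V) (w : List (V × Bool)) (v : V) : Prop :=
  ∃ (w₁ w' w₂ : List (V × Bool)) (b : Bool),
    w = w₁ ++ (v, b) :: (w' ++ (v, !b) :: w₂) ∧
    ∀ u ∈ raagSupp Γ (wordProd Γ w'), ¬ Γ.Adj v u

/-- An innermost cancellation of the vertex `v` in the word `w`: a cancellation
`v^{±1} w' v^{∓1}` in which moreover no letter of `w'` involves `v`. -/
def HasInnermostCancellationOf {V : Type*} (Γ : SimpleGraph V) (w : List (V × Bool)) (v : V) :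
    Prop :=
  ∃ (w₁ w' w₂ : List (V × Bool)) (b : Bool),
    w = w₁ ++ (v, b) :: (w' ++ (v, !b) :: w₂) ∧
    (∀ u ∈ raagSupp Γ (wordProd Γ w'), ¬ Γ.Adj v u) ∧
    ∀ b' : Bool, (v, b') ∉ w'

/-- A covering of simple graphs: a graph homomorphism which is bijective on neighbor sets. -/
structure IsGraphCovering {V' V : Type*} (Γ' : SimpleGraph V') (Γ : SimpleGraph V)
    (p : V' → V) : Prop where
  adj : ∀ {x y : V'}, Γ'.Adj x y → Γ.Adj (p x) (p y)
  bijOn : ∀ x : V', Set.BijOn p (Γ'.neighborSet x) (Γ.neighborSet (p x))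

/-- A universal cover of a connected graph `Γ`: a covering whose total graph is a tree. -/
def IsUniversalCover {V' V : Type*} (Γ' : SimpleGraph V') (Γ : SimpleGraph V)
    (p : V' → V) : Prop :=
  IsGraphCovering Γ' Γ p ∧ Γ'.IsTree

section Phi

variable {V' V : Type*} [LinearOrder V'] [DecidableEq V]

/-- The lifts in `T` of a vertex `v`, listed in increasing order. -/
def liftVerts (p : V' → V) (T : Finset V') (v : V) : List V' :=
  (T.filter fun t => p t = v).sort (· ≤ ·)

/-- The lifts in `T` of a vertex `v`, in increasing order, as vertices of the induced subgraph. -/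
def liftSubVerts (p : V' → V) (T : Finset V') (v : V) : List (↥(T : Set V')) :=
  (liftVerts p T v).pmap (fun t ht => (⟨t, ht⟩ : ↥(T : Set V')))
    (fun t ht => by
      have : t ∈ T := (Finset.mem_filter.mp ((Finset.mem_sort _).mp ht)).1
      exact Finset.mem_coe.mpr this)

/-- `φ(Γ,T)` sends each vertex `v` of `Γ` to the product, in increasing order,
of the lifts of `v` lying in `T`.  This predicate singles out the homomorphism `φ(Γ,T)`. -/
def IsPhi (Γ : SimpleGraph V) (Γ' : SimpleGraph V') (p : V' → V) (T : Finset V')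
    (φ : Raag Γ →* Raag (Γ'.induce (T : Set V'))) : Prop :=
  ∀ v : V, φ (Raag.of Γ v) =
    ((liftSubVerts p T v).map (Raag.of (Γ'.induce (T : Set V')))).prod

/-- The `φ(Γ,T)`-homomorphic word of a word `w`: each letter `x^{e}` of `w` is replaced by the
word `(t₁ t₂ ⋯ t_k)^{e}` where `t₁ < t₂ < ⋯ < t_k` are the lifts of `x` lying in `T`. -/
def homWord (p : V' → V) (T : Finset V') (w : List (V × Bool)) :
    List (↥(T : Set V') × Bool) :=
  w.flatMap fun l =>
    if l.2 then (liftSubVerts p T l.1).map (fun t => (t, true))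
    else ((liftSubVerts p T l.1).reverse).map (fun t => (t, false))

/-- `φ(Γ,T)` is `F`-surviving: for every reduced word `w` in `G(Γ)` and every `v ∈ F`, the
`φ(Γ,T)`-homomorphic word of `w` has no cancellation of `v`. -/
def IsSurviving (Γ : SimpleGraph V) (Γ' : SimpleGraph V') (p : V' → V) (T : Finset V')
    (F : Set V') : Prop :=
  ∀ w : List (V × Bool), IsReducedWord Γ w →
    ∀ (v : V') (hv : v ∈ (T : Set V')), v ∈ F →
      ¬ HasCancellationOf (Γ'.induce (T : Set V')) (homWord p T w) ⟨v, hv⟩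

end Phi

noncomputable section

namespace RaagTwo

open scoped Classical commutatorElement

/-! ### The Magnus expansion and its filtration -/

/-- Left multiplication by `1 + x` on noncommutative power series in the alphabet `X`, where a
series is encoded as the function sending a word to its coefficient. -/
def up {X : Type} (x : X) (φ : List X → ℤ) : List X → ℤ
  | [] => φ []
  | y :: l => φ (y :: l) + if y = x then φ l else 0

/-- Left multiplication by `(1 + x)⁻¹ = 1 - x + x² - ⋯` on noncommutative power series. -/
def down {X : Type} (x : X) (φ : List X → ℤ) : List X → ℤ
  | [] => φ []
  | y :: l => φ (y :: l) - if y = x then down x φ l else 0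

lemma down_up {X : Type} (x : X) (φ : List X → ℤ) : down x (up x φ) = φ := by
  funext l
  induction l with
  | nil => rfl
  | cons y l ih => simp only [down, up, ih]; ring

lemma up_down {X : Type} (x : X) (φ : List X → ℤ) : up x (down x φ) = φ := by
  funext l
  cases l with
  | nil => rfl
  | cons y l => simp only [down, up]; ring

/-- Multiplication by `1 + x` as a permutation of the set of power series. -/
def upEquiv {X : Type} (x : X) : Equiv.Perm (List X → ℤ) :=
  ⟨up x, down x, down_up x, up_down x⟩

/-- The action of the free group on power series in which the letter `x` multiplies by `1 + x`. -/
def magnusAct (X : Type) : FreeGroup X →* Equiv.Perm (List X → ℤ) := FreeGroup.lift upEquiv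

/-- The power series `1`. -/
def unitSeries (X : Type) : List X → ℤ := fun l => if l = [] then 1 else 0

/-- The Magnus expansion of `w`, the image of `w` under `x ↦ 1 + x`, as a function from words to
their integer coefficients. -/
def mag {X : Type} (w : FreeGroup X) : List X → ℤ := magnusAct X w (unitSeries X)

/-- The product of two noncommutative power series: the coefficient of `l` is the sum of
`ε s * φ t` over all factorizations `l = s ++ t`. -/
def conv {X : Type} : (List X → ℤ) → (List X → ℤ) → List X → ℤ
  | ε, φ, [] => ε [] * φ []
  | ε, φ, y :: l => ε [] * φ (y :: l) + conv (fun t => ε (y :: t)) φ l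

lemma conv_add {X : Type} (ε ε' φ : List X → ℤ) (l : List X) :
    conv (fun t => ε t + ε' t) φ l = conv ε φ l + conv ε' φ l := by
  induction l generalizing ε ε' with
  | nil => simp only [conv]; ring
  | cons y l ih => simp only [conv, ih]; ring

lemma conv_zero {X : Type} (φ : List X → ℤ) (l : List X) : conv (fun _ => 0) φ l = 0 := by
  induction l with
  | nil => simp [conv]
  | cons y l ih => simp [conv, ih]

lemma conv_unit {X : Type} (φ : List X → ℤ) : conv (unitSeries X) φ = φ := by
  funext l
  cases l with
  | nil => simp [conv, unitSeries]
  | cons y l => simp [conv, unitSeries, conv_zero]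

lemma up_conv {X : Type} (x : X) (ε φ : List X → ℤ) : up x (conv ε φ) = conv (up x ε) φ := by
  funext l
  cases l with
  | nil => rfl
  | cons y l =>
    simp only [conv, up, conv_add]
    split_ifs with h
    · ring
    · simp [conv_zero]

lemma magnusAct_conv {X : Type} (w : FreeGroup X) : ∀ ε φ : List X → ℤ,
    magnusAct X w (conv ε φ) = conv (magnusAct X w ε) φ := by
  induction w using FreeGroup.induction_on with
  | C1 => simp
  | of x => intro ε φ; simpa [magnusAct, upEquiv] using up_conv x ε φ
  | inv_of x h =>
    intro ε φ
    rw [map_inv, Equiv.Perm.inv_eq_iff_eq, h, ← Equiv.Perm.mul_apply, mul_inv_cancel]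
    rfl
  | mul u v hu hv => intro ε φ; simp [hu, hv]

lemma mag_mul {X : Type} (u v : FreeGroup X) : mag (u * v) = conv (mag u) (mag v) := by
  unfold mag
  rw [map_mul, Equiv.Perm.mul_apply, ← magnusAct_conv, conv_unit]

lemma mag_one {X : Type} : mag (1 : FreeGroup X) = unitSeries X := by simp [mag]

lemma mag_nil {X : Type} (w : FreeGroup X) : mag w [] = 1 := by
  suffices ∀ φ : List X → ℤ, magnusAct X w φ [] = φ [] by
    rw [mag, this]; simp [unitSeries]
  induction w using FreeGroup.induction_on with
  | C1 => simp
  | of x => intro φ; simp [magnusAct, upEquiv, up]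
  | inv_of x h =>
    intro φ
    rw [← h (magnusAct X _ φ), ← Equiv.Perm.mul_apply, map_inv, mul_inv_cancel]; rfl
  | mul u v hu hv => intro φ; simp [hu, hv]

lemma conv_left_low {X : Type} (φ : List X → ℤ) (l : List X) (ε : List X → ℤ)
    (h : ∀ t : List X, t.length < l.length → ε t = 0) : conv ε φ l = ε l * φ [] := by
  induction l generalizing ε with
  | nil => rfl
  | cons y l ih =>
    rw [conv, ih _ fun t ht => h _ (by simpa using ht), h [] (by simp)]; ring

lemma conv_right_low {X : Type} (φ : List X → ℤ) (l : List X) (ε : List X → ℤ)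
    (h : ∀ t : List X, t ≠ [] → t.length ≤ l.length → φ t = 0) : conv ε φ l = ε l * φ [] := by
  induction l generalizing ε with
  | nil => rfl
  | cons y l ih =>
    rw [conv, ih _ fun t ht ht' => h _ ht (ht'.trans (by simp)), h (y :: l) (by simp) le_rfl]; ring

/-- `w` is `n`-deep when its Magnus expansion is `1` plus terms of degree at least `n`. The
`n`-deep elements play the role of the `n`-th term of the lower central series. -/
def Deep {X : Type} (n : ℕ) (w : FreeGroup X) : Prop :=
  ∀ l : List X, l ≠ [] → l.length < n → mag w l = 0

/-- In degrees up to the depth of one factor, Magnus coefficients are additive. -/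
lemma mag_mul_left {X : Type} {n : ℕ} {u : FreeGroup X} (hu : Deep n u) (v : FreeGroup X)
    {l : List X} (hl : l ≠ []) (hn : l.length ≤ n) : mag (u * v) l = mag u l + mag v l := by
  cases l with
  | nil => exact absurd rfl hl
  | cons y l =>
    rw [mag_mul, conv, conv_left_low, mag_nil, mag_nil]
    · ring
    · intro t ht
      exact hu _ (by simp) (lt_of_lt_of_le (by simpa using ht) hn)

lemma mag_mul_right {X : Type} {n : ℕ} {v : FreeGroup X} (hv : Deep n v) (u : FreeGroup X)
    {l : List X} (hl : l ≠ []) (hn : l.length ≤ n) : mag (u * v) l = mag u l + mag v l := by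
  cases l with
  | nil => exact absurd rfl hl
  | cons y l =>
    rw [mag_mul, conv, conv_right_low, mag_nil, mag_nil]
    · ring
    · intro t ht ht'
      exact hv _ ht (lt_of_le_of_lt ht' (lt_of_lt_of_le (by simp) hn))

lemma Deep.mono {X : Type} {m n : ℕ} {w : FreeGroup X} (h : Deep n w) (hmn : m ≤ n) : Deep m w :=
  fun l hl hlm => h l hl (hlm.trans_le hmn)

lemma deep_one_elt {X : Type} (n : ℕ) : Deep n (1 : FreeGroup X) := fun l hl _ => by
  simp [mag_one, unitSeries, hl]

lemma Deep.mul {X : Type} {n : ℕ} {u v : FreeGroup X} (hu : Deep n u) (hv : Deep n v) :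
    Deep n (u * v) := fun l hl hn => by
  rw [mag_mul_left hu v hl hn.le, hu l hl hn, hv l hl hn, add_zero]

lemma mag_inv {X : Type} {n : ℕ} {u : FreeGroup X} (hu : Deep n u)
    {l : List X} (hl : l ≠ []) (hn : l.length ≤ n) : mag u⁻¹ l = - mag u l := by
  have := mag_mul_left hu u⁻¹ hl hn
  rw [mul_inv_cancel, mag_one] at this
  simp only [unitSeries, hl, if_false] at this
  linarith

lemma Deep.inv {X : Type} {n : ℕ} {u : FreeGroup X} (hu : Deep n u) : Deep n u⁻¹ :=
  fun l hl hn => by rw [mag_inv hu hl hn.le, hu l hl hn, neg_zero]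

lemma deep_conj_aux {X : Type} {n : ℕ} {u : FreeGroup X} (hu : Deep n u) (g : FreeGroup X) (k : ℕ) :
    k ≤ n → (∀ l : List X, l ≠ [] → l.length ≤ k → mag (g * u * g⁻¹) l = mag u l) := by
  induction k with
  | zero => intro _ l hl h; simp at h; exact absurd h hl
  | succ k ih =>
    intro hk l hl hlk
    have hd : Deep (k + 1) (g * u * g⁻¹) := fun t ht htk => by
      rw [ih (by omega) t ht (by omega), hu t ht (by omega)]
    have h1 := mag_mul_left hd g hl hlk
    rw [inv_mul_cancel_right, mag_mul_right hu g hl (hlk.trans hk)] at h1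
    linarith

/-- Conjugation does not change the leading coefficients. -/
lemma mag_conj {X : Type} {n : ℕ} {u : FreeGroup X} (hu : Deep n u) (g : FreeGroup X)
    {l : List X} (hl : l ≠ []) (hn : l.length ≤ n) : mag (g * u * g⁻¹) l = mag u l :=
  deep_conj_aux hu g n le_rfl l hl hn

lemma Deep.conj {X : Type} {n : ℕ} {u : FreeGroup X} (hu : Deep n u) (g : FreeGroup X) :
    Deep n (g * u * g⁻¹) :=
  fun l hl hn => by rw [mag_conj hu g hl hn.le, hu l hl hn]

/-- The subgroup of `n`-deep elements. -/
def deepSubgroup (X : Type) (n : ℕ) : Subgroup (FreeGroup X) where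
  carrier := {w | Deep n w}
  mul_mem' := Deep.mul
  one_mem' := deep_one_elt n
  inv_mem' := Deep.inv

lemma Deep.commutator {X : Type} {n : ℕ} {u : FreeGroup X} (hu : Deep n u) (g : FreeGroup X) :
    Deep (n + 1) ⁅u, g⁆ := fun l hl hn => by
  have : ⁅u, g⁆ = u * (g * u⁻¹ * g⁻¹) := by simp [commutatorElement_def, mul_assoc]
  have hn' : l.length ≤ n := by omega
  rw [this, mag_mul_left hu _ hl hn', mag_conj hu.inv g hl hn', mag_inv hu hl hn', add_neg_cancel]

/-- Every element is `1`-deep: the only constraint would concern words of length zero. -/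
lemma deep_zero {X : Type} (w : FreeGroup X) : Deep 1 w := fun l hl hn => by
  have : l.length = 0 := by omega
  exact absurd (List.length_eq_zero_iff.1 this) hl

/-! ### Faithfulness of the Magnus expansion -/

/-- The effect on power series of multiplying by a single signed letter of a group word. -/
def step {X : Type} (p : X × Bool) (φ : List X → ℤ) : List X → ℤ :=
  if p.2 then up p.1 φ else down p.1 φ

lemma mag_mk {X : Type} (L : List (X × Bool)) :
    mag (FreeGroup.mk L) = L.foldr step (unitSeries X) := by
  induction L with
  | nil => simp [mag, ← FreeGroup.one_eq_mk]
  | cons p L ih =>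
    rw [List.foldr_cons, ← ih, mag, mag, ← List.singleton_append, ← FreeGroup.mul_mk, map_mul,
      Equiv.Perm.mul_apply]
    obtain ⟨x, b⟩ := p
    cases b
    · simp [magnusAct, step, upEquiv, Equiv.Perm.inv_def]
    · simp [magnusAct, step, upEquiv]

lemma step_of_head_ne {X : Type} (p : X × Bool) (φ : List X → ℤ) (l : List X)
    (h : ∀ y ∈ l.head?, p.1 ≠ y) : step p φ l = φ l := by
  cases l with
  | nil => unfold step; split_ifs <;> rfl
  | cons y l =>
    have : y ≠ p.1 := fun e => h y (by simp) e.symm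
    unfold step; split_ifs <;> simp [up, down, this]

lemma step_cons {X : Type} (p : X × Bool) (φ : List X → ℤ) (l : List X)
    (h : ∀ y ∈ l.head?, p.1 ≠ y) :
    step p φ (p.1 :: l) = φ (p.1 :: l) + (if p.2 then 1 else -1) * φ l := by
  have := step_of_head_ne p φ l h
  unfold step at *
  split_ifs with hb
  · simp [up]
  · simp only [hb] at this
    simp only [down, if_true]
    rw [show down p.1 φ l = φ l from this]
    ring

/-- Group the reduced word `p :: L` into syllables; their letters form a list `p.1 :: l` without
equal neighbours. Among words without equal neighbours the expansion of `p :: L` then lives in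
lengths at most that of `p.1 :: l`, in that length only on words starting with `p.1`, and its
coefficient at `p.1 :: l` is `±e` times the coefficient `P ≠ 0` at `l`, with `e` the length of the
first syllable. This is the form of Magnus' argument that can be proved by induction on the word. -/
lemma mag_reduced {X : Type} (L : List (X × Bool)) : ∀ p : X × Bool,
    FreeGroup.IsReduced (p :: L) →
    ∃ (l : List X) (P : ℤ) (e : ℕ), (p.1 :: l).IsChain (· ≠ ·) ∧ P ≠ 0 ∧ 1 ≤ e ∧
      (p :: L).foldr step (unitSeries X) l = P ∧
      (p :: L).foldr step (unitSeries X) (p.1 :: l) = (if p.2 then 1 else -1) * e * P ∧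
      (∀ t : List X, t.IsChain (· ≠ ·) → l.length + 1 < t.length →
        (p :: L).foldr step (unitSeries X) t = 0) ∧
      (∀ t : List X, t.IsChain (· ≠ ·) → t.length = l.length + 1 → t.head? ≠ some p.1 →
        (p :: L).foldr step (unitSeries X) t = 0) := by
  have key : ∀ (p : X × Bool) (φ : List X → ℤ) (t : List X), t.IsChain (· ≠ ·) → φ t = 0 →
      (∀ t', t = p.1 :: t' → φ t' = 0) → step p φ t = 0 := by
    intro p φ t ht h1 h2
    by_cases hh : ∃ t', t = p.1 :: t'
    · obtain ⟨t', rfl⟩ := hh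
      rw [step_cons p φ t' (List.isChain_cons.1 ht).1, h1, h2 t' rfl]; ring
    · rw [step_of_head_ne, h1]
      rintro y hy rfl
      cases t with
      | nil => simp at hy
      | cons z t => simp at hy; exact hh ⟨t, by rw [hy]⟩
  induction L with
  | nil =>
    intro p _
    refine ⟨[], 1, 1, by simp, one_ne_zero, le_rfl, ?_, ?_, ?_, ?_⟩
    · rw [List.foldr_cons, step_of_head_ne _ _ _ (by simp)]; simp [unitSeries]
    · rw [List.foldr_cons, step_cons _ _ _ (by simp)]; simp [unitSeries]
    · intro t ht htl
      rw [List.foldr_cons]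
      apply key _ _ _ ht
      · have : t ≠ [] := by rintro rfl; simp at htl
        simp [unitSeries, this]
      · rintro t' rfl
        have : t' ≠ [] := by rintro rfl; simp at htl
        simp [unitSeries, this]
    · intro t ht htl hh
      rw [List.foldr_cons, step_of_head_ne]
      · have : t ≠ [] := by rintro rfl; simp at htl
        simp [unitSeries, this]
      · rintro y hy rfl; exact hh hy
  | cons q L ih =>
    intro p hp
    have hp' := List.isChain_cons_cons.1 hp
    obtain ⟨l, P, e, hc, hP, he, h1, h2, h3, h4⟩ := ih q hp'.2
    by_cases hpq : p.1 = q.1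
    · have hb := hp'.1 hpq
      have hpq' : p = q := Prod.ext hpq hb
      subst hpq'
      have hl := (List.isChain_cons.1 hc).1
      refine ⟨l, P, e + 1, hc, hP, by omega, ?_, ?_, ?_, ?_⟩
      · rw [List.foldr_cons, step_of_head_ne _ _ _ hl, h1]
      · rw [List.foldr_cons, step_cons _ _ _ hl, h1, h2]; push_cast; ring
      · intro t ht htl
        rw [List.foldr_cons]
        apply key _ _ _ ht (h3 t ht htl)
        rintro t' rfl
        have ht' := List.isChain_cons.1 ht
        rcases (show l.length + 1 ≤ t'.length by simp at htl; omega).lt_or_eq with h | h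
        · exact h3 t' ht'.2 h
        · exact h4 t' ht'.2 h.symm fun e => ht'.1 _ e rfl
      · intro t ht htl hh
        rw [List.foldr_cons, step_of_head_ne, h4 t ht htl hh]
        rintro y hy rfl; exact hh hy
    · have hl : ∀ y ∈ (q.1 :: l).head?, p.1 ≠ y := by simpa using hpq
      refine ⟨q.1 :: l, (if q.2 then 1 else -1) * e * P, 1, ?_, ?_, le_rfl, ?_, ?_, ?_, ?_⟩
      · exact List.isChain_cons_cons.2 ⟨hpq, hc⟩
      · have : (e : ℤ) ≠ 0 := by omega
        refine mul_ne_zero (mul_ne_zero ?_ this) hP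
        split_ifs <;> simp
      · rw [List.foldr_cons, step_of_head_ne _ _ _ hl, h2]
      · rw [List.foldr_cons, step_cons _ _ _ hl, h2, h3 _ (List.isChain_cons_cons.2 ⟨hpq, hc⟩)
          (by simp)]
        push_cast; ring
      · intro t ht htl
        rw [List.foldr_cons]
        simp only [List.length_cons] at htl
        apply key _ _ _ ht (h3 t ht (by omega))
        rintro t' rfl
        exact h3 t' (List.isChain_cons.1 ht).2 (by simp at htl; omega)
      · intro t ht htl hh
        simp only [List.length_cons] at htl
        rw [List.foldr_cons, step_of_head_ne, h3 t ht (by omega)]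
        rintro y hy rfl; exact hh hy

/-- Magnus: the expansion is faithful. -/
lemma exists_mag_ne_zero {X : Type} {w : FreeGroup X} (hw : w ≠ 1) :
    ∃ l : List X, l ≠ [] ∧ mag w l ≠ 0 := by
  have hr : FreeGroup.IsReduced w.toWord := FreeGroup.isReduced_toWord
  rw [← FreeGroup.mk_toWord (x := w)]
  rcases h : w.toWord with _ | ⟨p, L⟩
  · exact absurd (FreeGroup.toWord_eq_nil_iff.1 h) hw
  · rw [h] at hr
    obtain ⟨l, P, e, -, hP, he, -, h2, -⟩ := mag_reduced L p hr
    refine ⟨p.1 :: l, by simp, ?_⟩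
    rw [mag_mk, h2]
    have : (e : ℤ) ≠ 0 := by omega
    refine mul_ne_zero (mul_ne_zero ?_ this) hP
    split_ifs <;> simp

/-- A nontrivial element has a leading word: one of minimal positive degree in its expansion. -/
lemma exists_lead {X : Type} {w : FreeGroup X} (hw : w ≠ 1) :
    ∃ m : List X, m ≠ [] ∧ mag w m ≠ 0 ∧ Deep m.length w := by
  obtain ⟨l, hl, hm⟩ := exists_mag_ne_zero hw
  have hex : ∃ n, ∃ m : List X, m.length = n ∧ m ≠ [] ∧ mag w m ≠ 0 := ⟨_, l, rfl, hl, hm⟩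
  obtain ⟨m, hmn, hm0, hm1⟩ := Nat.find_spec hex
  refine ⟨m, hm0, hm1, fun t ht htl => ?_⟩
  by_contra h
  exact Nat.find_min hex (hmn ▸ htl) ⟨t, rfl, ht, h⟩

/-- The Magnus filtration of a free group intersects in the trivial group. -/
lemma eq_one_of_deep {X : Type} {w : FreeGroup X} (h : ∀ n, Deep n w) : w = 1 := by
  by_contra hw
  obtain ⟨l, hl, hm⟩ := exists_mag_ne_zero hw
  exact hm (h (l.length + 1) l hl (by omega))

/-! ### Finiteness of homogeneous parts and restriction of the alphabet -/

/-- Every homogeneous part of the series is a polynomial. Over an infinite alphabet this is not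
automatic. -/
def FinHom {X : Type} (φ : List X → ℤ) : Prop := ∀ n, {l : List X | l.length = n ∧ φ l ≠ 0}.Finite

lemma finHom_up {X : Type} (x : X) {φ : List X → ℤ} (h : FinHom φ) : FinHom (up x φ) := by
  intro n
  refine ((h n).union ((h (n - 1)).image (List.cons x))).subset ?_
  rintro (_ | ⟨y, l⟩) ⟨hl, hn⟩
  · exact Or.inl ⟨hl, hn⟩
  · by_cases h0 : φ (y :: l) = 0
    · by_cases hy : y = x
      · subst hy
        refine Or.inr ⟨l, ⟨by simp at hl; omega, ?_⟩, rfl⟩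
        simpa [up, h0] using hn
      · simp [up, h0, hy] at hn
    · exact Or.inl ⟨hl, h0⟩

lemma finHom_down {X : Type} (x : X) {φ : List X → ℤ} (h : FinHom φ) : FinHom (down x φ) := by
  intro n
  induction n with
  | zero => exact (Set.finite_singleton []).subset fun l hl => by simpa using hl.1
  | succ n ih =>
    refine ((h (n + 1)).union (ih.image (List.cons x))).subset ?_
    rintro (_ | ⟨y, l⟩) ⟨hl, hn⟩
    · exact Or.inl ⟨hl, hn⟩
    · by_cases h0 : φ (y :: l) = 0
      · by_cases hy : y = x
        · subst hy
          refine Or.inr ⟨l, ⟨by simpa using hl, ?_⟩, rfl⟩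
          simpa [down, h0] using hn
        · simp [down, h0, hy] at hn
      · exact Or.inl ⟨hl, h0⟩

lemma finHom_mag {X : Type} (w : FreeGroup X) : FinHom (mag w) := by
  suffices ∀ φ : List X → ℤ, FinHom φ → FinHom (magnusAct X w φ) from
    this _ fun n => (Set.finite_singleton []).subset fun l hl => by
      by_contra h; exact hl.2 (by simpa [unitSeries] using h)
  induction w using FreeGroup.induction_on with
  | C1 => simp
  | of x => intro φ; simpa [magnusAct, upEquiv] using finHom_up x
  | inv_of x h => intro φ; simpa [magnusAct, upEquiv, Equiv.Perm.inv_def] using finHom_down x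
  | mul u v hu hv => intro φ h; simpa using hu _ (hv _ h)

/-- The retraction onto the free group on the subalphabet `Y`, embedded in `X` by an injective
map `f`; it kills the letters of `X` outside the range of `f`. -/
def retr {X Y : Type} (f : Y → X) : FreeGroup X →* FreeGroup Y :=
  FreeGroup.lift fun x => if h : ∃ y, f y = x then FreeGroup.of h.choose else 1

/-- The expansion of the retraction is the restriction of the expansion to words in the subalphabet. -/
lemma mag_retr {X Y : Type} {f : Y → X} (hf : Function.Injective f) (w : FreeGroup X)
    (m : List Y) : mag (retr f w) m = mag w (m.map f) := by
  suffices ∀ φ : List X → ℤ, magnusAct Y (retr f w) (fun l => φ (l.map f)) =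
      fun l => magnusAct X w φ (l.map f) by
    have h := congrFun (this (unitSeries X)) m
    have hu : unitSeries Y = fun l => unitSeries X (l.map f) := funext fun l => by simp [unitSeries]
    rw [mag, mag, ← h, ← hu]
  have hof : ∀ (x : X) (φ : List X → ℤ), magnusAct Y (retr f (.of x)) (fun l => φ (l.map f)) =
      fun l => magnusAct X (.of x) φ (l.map f) := by
    intro x φ
    by_cases h : ∃ y, f y = x
    · obtain ⟨y, rfl⟩ := h
      have hc : (⟨y, rfl⟩ : ∃ z, f z = f y).choose = y := hf (Exists.choose_spec (p := fun z => f z = f y) _)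
      funext l
      simp only [retr, FreeGroup.lift_apply_of, exists_apply_eq_apply, dif_pos, hc, magnusAct,
        upEquiv, Equiv.coe_fn_mk]
      cases l with
      | nil => rfl
      | cons z l => simp [up, hf.eq_iff]
    · funext l
      simp only [retr, FreeGroup.lift_apply_of, h, dif_neg, not_false_eq_true, magnusAct, map_one,
        upEquiv, Equiv.coe_fn_mk, Equiv.Perm.coe_one, id]
      cases l with
      | nil => rfl
      | cons z l =>
        have : f z ≠ x := fun e => h ⟨z, e⟩
        simp [up, this]
  induction w using FreeGroup.induction_on with
  | C1 => simp
  | of x => exact hof x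
  | inv_of x h =>
    intro φ
    rw [map_inv, map_inv, Equiv.Perm.inv_eq_iff_eq, hof]
    funext l
    exact (congrFun (Equiv.apply_symm_apply (magnusAct X (.of x)) φ) _).symm
  | mul u v hu hv => intro φ; simp only [map_mul, Equiv.Perm.mul_apply, hu, hv]

/-! ### Freeness from independence of leading coefficients -/

/-- The exponent sums of a word, i.e. its image in the abelianization. -/
def expo {ι : Type} (w : FreeGroup ι) : ι →₀ ℤ :=
  FreeAbelianGroup.toFinsupp (X := ι) (Additive.ofMul (Abelianization.of w))

lemma expo_mul {ι : Type} (u v : FreeGroup ι) : expo (u * v) = expo u + expo v := by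
  unfold expo
  rw [map_mul, ofMul_mul]
  exact map_add FreeAbelianGroup.toFinsupp _ _

lemma expo_one {ι : Type} : expo (1 : FreeGroup ι) = 0 := by
  have := expo_mul (1 : FreeGroup ι) 1
  simpa using this

lemma expo_inv {ι : Type} (u : FreeGroup ι) : expo u⁻¹ = - expo u := by
  have := expo_mul u u⁻¹
  rw [mul_inv_cancel, expo_one] at this
  exact (neg_eq_of_add_eq_zero_right this.symm).symm

lemma expo_of {ι : Type} (i : ι) : expo (FreeGroup.of i) = Finsupp.single i 1 :=
  FreeAbelianGroup.toFinsupp_of i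

lemma mem_commutator_of_expo {ι : Type} {w : FreeGroup ι} (h : expo w = 0) :
    w ∈ commutator (FreeGroup ι) := by
  rw [← Abelianization.ker_of, MonoidHom.mem_ker]
  have h' := (FreeAbelianGroup.equivFinsupp ι).injective
    (a₁ := Additive.ofMul (Abelianization.of w)) (a₂ := 0)
    (by rw [map_zero]; exact h)
  exact h'

/-- Substituting `n`-deep elements `y i` into a word, the coefficients of degree at most `n`
depend only on the exponent sums of the word. -/
lemma mag_lift_lead {X ι : Type} {n : ℕ} {y : ι → FreeGroup X} (hy : ∀ i, Deep n (y i))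
    (w : FreeGroup ι) : Deep n (FreeGroup.lift y w) ∧ ∀ l : List X, l ≠ [] → l.length ≤ n →
      mag (FreeGroup.lift y w) l = (expo w).sum fun i k => k * mag (y i) l := by
  have hs : ∀ (l : List X) (c d : ι →₀ ℤ), ((c + d).sum fun i k => k * mag (y i) l) =
      (c.sum fun i k => k * mag (y i) l) + d.sum fun i k => k * mag (y i) l := by
    intro l c d
    exact Finsupp.sum_add_index' (by simp) (by intros; ring)
  induction w using FreeGroup.induction_on with
  | C1 =>
    refine ⟨by simpa using deep_one_elt n, fun l hl _ => ?_⟩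
    simp [expo_one, mag_one, unitSeries, hl]
  | of i =>
    refine ⟨by simpa using hy i, fun l hl _ => ?_⟩
    rw [expo_of]; simp
  | inv_of i h =>
    refine ⟨by simpa using (hy i).inv, fun l hl hn => ?_⟩
    have h2 := h.2 l hl hn
    rw [map_inv, mag_inv h.1 hl hn, h2, expo_inv, Finsupp.sum_neg_index (by simp)]
    simp [Finsupp.sum]
  | mul u v hu hv =>
    rw [map_mul]
    refine ⟨hu.1.mul hv.1, fun l hl hn => ?_⟩
    rw [mag_mul_left hu.1 _ hl hn, hu.2 l hl hn, hv.2 l hl hn, expo_mul, hs]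

/-- If the degree `n` parts of a family of `n`-deep elements are linearly independent over `ℤ`,
then the family freely generates a free group.

The image `S` is free by Nielsen–Schreier, so `FreeGroup ι → S` has a section, and every `u` is
congruent to `e u` modulo the kernel `R`, where `e` retracts onto the image of the section. Modulo
`⁅R, ⊤⁆` the kernel is central, so elements of the commutator subgroup are congruent to their images
under `e`. Independence puts `R` inside the commutator subgroup, and `e` is trivial on `R`; hence
`R = ⁅R, ⊤⁆`, and `R` lies in every term of the Magnus filtration. -/
theorem lift_injective_of_indep {X ι : Type} {n : ℕ} (hn : n ≠ 0) {y : ι → FreeGroup X}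
    (hy : ∀ i, Deep n (y i))
    (hind : ∀ c : ι →₀ ℤ,
      (∀ l : List X, l.length = n → (c.sum fun i k => k * mag (y i) l) = 0) → c = 0) :
    Function.Injective (FreeGroup.lift y) := by
  set f := FreeGroup.lift y
  let S := f.range
  let π : FreeGroup ι →* S := f.rangeRestrict
  have hπ : Function.Surjective π := f.rangeRestrict_surjective
  let σ : S →* FreeGroup ι := IsFreeGroup.lift fun g => (hπ (IsFreeGroup.of g)).choose
  have hσ : π.comp σ = MonoidHom.id S := by
    apply IsFreeGroup.ext_hom
    intro g
    simp only [MonoidHom.comp_apply, MonoidHom.id_apply, σ, IsFreeGroup.lift_of]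
    exact (hπ (IsFreeGroup.of g)).choose_spec
  let R := f.ker
  let Q := FreeGroup ι ⧸ (⁅R, ⊤⁆ : Subgroup (FreeGroup ι))
  let q : FreeGroup ι →* Q := QuotientGroup.mk' _
  let e : FreeGroup ι →* FreeGroup ι := σ.comp π
  have hcentral : ∀ r ∈ R, ∀ u, Commute (q r) (q u) := by
    intro r hr u
    rw [← commutatorElement_eq_one_iff_commute, ← map_commutatorElement]
    exact (QuotientGroup.eq_one_iff _).2 (Subgroup.commutator_mem_commutator hr trivial)
  have hdiff : ∀ u, ∃ r ∈ R, u = e u * r := by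
    intro u
    refine ⟨(e u)⁻¹ * u, ?_, by group⟩
    have h1 : π (e u) = π u := DFunLike.congr_fun hσ (π u)
    have h2 : f (e u) = f u := congrArg Subtype.val h1
    rw [MonoidHom.mem_ker, map_mul, map_inv, h2, inv_mul_cancel]
  have hcomm : ∀ w ∈ commutator (FreeGroup ι), q w = q (e w) := by
    intro w hw
    have : commutator (FreeGroup ι) ≤ MonoidHom.eqLocus q (q.comp e) := by
      rw [commutator_def, Subgroup.commutator_le]
      intro u _ v _
      change q ⁅u, v⁆ = q (e ⁅u, v⁆)
      obtain ⟨r, hr, hu⟩ := hdiff u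
      obtain ⟨s, hs, hv⟩ := hdiff v
      rw [map_commutatorElement, map_commutatorElement, map_commutatorElement]
      have hu' : q u = q (e u) * q r := by rw [← map_mul, ← hu]
      have hv' : q v = q (e v) * q s := by rw [← map_mul, ← hv]
      have c1 := hcentral r hr (e u)
      have c2 := hcentral r hr (e v)
      have c3 := hcentral s hs (e u)
      have c4 := hcentral s hs (e v)
      have c5 := hcentral r hr s
      rw [hu', hv']
      generalize q (e u) = a at *
      generalize q (e v) = b at *
      generalize q r = r' at *
      generalize q s = s' at *
      calc ⁅a * r', b * s'⁆ = a * (r' * (b * s')) * (r'⁻¹ * a⁻¹) * (s'⁻¹ * b⁻¹) := by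
            simp [commutatorElement_def, mul_assoc]
        _ = a * b * (s' * a⁻¹) * (s'⁻¹ * b⁻¹) := by
            rw [(c2.mul_right c5).eq]; group
        _ = ⁅a, b⁆ := by
            rw [(c3.inv_right).eq]; simp [commutatorElement_def, mul_assoc]
    exact this hw
  have hRcomm : ∀ r ∈ R, r ∈ commutator (FreeGroup ι) := by
    intro r hr
    refine mem_commutator_of_expo (hind _ fun l hl => ?_)
    have hl0 : l ≠ [] := by rintro rfl; exact hn hl.symm
    rw [← (mag_lift_lead hy r).2 l hl0 hl.le]
    rw [show FreeGroup.lift y r = 1 from hr, mag_one]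
    simp [unitSeries, hl0]
  have hR : R ≤ ⁅R, ⊤⁆ := by
    intro r hr
    rw [← QuotientGroup.eq_one_iff]
    have h1 := hcomm r (hRcomm r hr)
    have h2 : π r = 1 := Subtype.ext hr
    have h3 : e r = 1 := by simp [e, h2]
    rw [h3, map_one] at h1
    exact h1
  have hdeep : ∀ n, R ≤ deepSubgroup ι n := by
    intro n
    induction n with
    | zero => exact fun r _ => (deep_zero r).mono (by omega)
    | succ n ih =>
      refine hR.trans (Subgroup.commutator_le.2 fun r hr g _ => ?_)
      exact Deep.commutator (ih hr) g
  rw [injective_iff_map_eq_one]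
  exact fun r hr => eq_one_of_deep fun n => hdeep n hr

/-! ### Permutations of the basis and freeness of orbits -/

/-- The action of permutations of the basis `X` on `FreeGroup X` by automorphisms. -/
def pa (X : Type) : Equiv.Perm X →* MulAut (FreeGroup X) where
  toFun := FreeGroup.freeGroupCongr
  map_one' := by ext; simp
  map_mul' s t := MulEquiv.ext fun w => by
    simp only [FreeGroup.freeGroupCongr_apply, MulAut.mul_apply, FreeGroup.map.comp]
    rfl

@[simp] lemma pa_of {X : Type} (s : Equiv.Perm X) (x : X) :
    pa X s (FreeGroup.of x) = FreeGroup.of (s x) := by simp [pa]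

lemma mag_pa {X : Type} (s : Equiv.Perm X) (w : FreeGroup X) (l : List X) :
    mag (pa X s w) (l.map s) = mag w l := by
  have h : (retr s : FreeGroup X →* FreeGroup X) = (pa X s⁻¹).toMonoidHom := by
    ext x
    have hx : ∃ y, s y = x := s.surjective x
    have : hx.choose = s⁻¹ x := by rw [Equiv.Perm.eq_inv_iff_eq]; exact hx.choose_spec
    change retr s (FreeGroup.of x) = pa X s⁻¹ (FreeGroup.of x)
    rw [pa_of, retr, FreeGroup.lift_apply_of, dif_pos hx, this]
  rw [← mag_retr s.injective, h]
  change mag ((pa X s⁻¹ * pa X s) w) l = _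
  rw [← map_mul, inv_mul_cancel, map_one]; rfl

lemma mag_pa' {X : Type} (s : Equiv.Perm X) (w : FreeGroup X) (l : List X) :
    mag (pa X s w) l = mag w (l.map ⇑s⁻¹) := by
  rw [← mag_pa s w, List.map_map]
  congr 1
  simp [Function.comp_def]

lemma deep_pa {X : Type} (s : Equiv.Perm X) {n : ℕ} {w : FreeGroup X} (h : Deep n w) :
    Deep n (pa X s w) := fun l hl hn => by
  rw [mag_pa']; exact h _ (by simpa using hl) (by simpa using hn)

/-- If no nontrivial element of the abelian group `A` fixes all letters of a word `m` in the support
of `φ`, the `A`-translates of the degree `m.length` part of `φ` are linearly independent. A relation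
`c`, read off along the orbit of `m`, says that `c` times a nonzero element of `ℤ[A]` vanishes. -/
theorem orbit_indep {X A : Type} [CommGroup A] [NoZeroDivisors (MonoidAlgebra ℤ A)]
    (θ : A →* Equiv.Perm X) {φ : List X → ℤ} (hφ : FinHom φ) {m : List X} (hm : φ m ≠ 0)
    (hstab : ∀ α : A, (∀ x ∈ m, θ α x = x) → α = 1) (c : A →₀ ℤ)
    (hc : ∀ l : List X, l.length = m.length →
      (c.sum fun α k => k * φ (l.map ⇑(θ α)⁻¹)) = 0) : c = 0 := by
  have hinj : Function.Injective fun α : A => m.map (θ α) := by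
    intro α β h
    have h' : ∀ x ∈ m, θ α x = θ β x := List.map_inj_left.1 h
    have : β⁻¹ * α = 1 := hstab _ fun x hx => by
      rw [map_mul, Equiv.Perm.mul_apply, h' x hx, ← Equiv.Perm.mul_apply, ← map_mul,
        inv_mul_cancel, map_one, Equiv.Perm.one_apply]
    exact (inv_mul_eq_one.1 this).symm
  have hfin : {α : A | φ (m.map (θ α)) ≠ 0}.Finite := by
    refine ((hφ m.length).preimage hinj.injOn).subset fun α hα => ?_
    exact ⟨by simp, hα⟩
  let p : MonoidAlgebra ℤ A := ⟨Finsupp.ofSupportFinite (fun α => φ (m.map (θ α))) hfin⟩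
  have hp : ∀ α, p.coeff α = φ (m.map (θ α)) := fun α => rfl
  have hp0 : p ≠ 0 := fun h => hm <| by
    have := hp 1
    simpa [h] using this.symm
  have hcp : (⟨c⟩ : MonoidAlgebra ℤ A) * p = 0 := by
    ext β
    rw [MonoidAlgebra.coeff_mul_apply_left]
    have := hc (m.map (θ β)) (by simp)
    simp only [List.map_map] at this
    simp only [hp, map_mul, map_inv]
    exact this
  have := (mul_eq_zero.1 hcp).resolve_right hp0
  exact congrArg MonoidAlgebra.coeff this

/-- The `A`-translates of a single element, each conjugated arbitrarily, freely generate a free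
group as soon as a leading word of the element has trivial pointwise stabilizer. -/
theorem orbit_free {X A : Type} [CommGroup A] [NoZeroDivisors (MonoidAlgebra ℤ A)]
    (θ : A →* Equiv.Perm X) {w : FreeGroup X} {m : List X} (hm0 : m ≠ [])
    (hw : Deep m.length w) (hm : mag w m ≠ 0)
    (hstab : ∀ α : A, (∀ x ∈ m, θ α x = x) → α = 1) (h : A → FreeGroup X) :
    Function.Injective (FreeGroup.lift fun α => h α * pa X (θ α) w * (h α)⁻¹) := by
  have hd : ∀ α, Deep m.length (pa X (θ α) w) := fun α => deep_pa _ hw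
  have hlen : m.length ≠ 0 := by simpa using hm0
  refine lift_injective_of_indep hlen (fun α => (hd α).conj (h α)) fun c hc => ?_
  refine orbit_indep θ (finHom_mag w) hm hstab c fun l hl => ?_
  rw [← hc l hl]
  refine Finsupp.sum_congr fun α _ => ?_
  have hl0 : l ≠ [] := by rintro rfl; exact hlen hl.symm
  rw [mag_conj (hd α) _ hl0 hl.le, mag_pa']

/-! ### Commuting and free pairs -/

/-- The homomorphism from the free group of rank two sending the two basis elements to `a` and `b`. -/
def pairHom {G : Type} [Group G] (a b : G) : FreeGroup Bool →* G :=
  FreeGroup.lift fun i => cond i a b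

/-- `a` and `b` freely generate a free group of rank two. -/
def FreePair {G : Type} [Group G] (a b : G) : Prop := Function.Injective (pairHom a b)

/-- The alternative to be established for every pair of elements. -/
def Good {G : Type} [Group G] (a b : G) : Prop := Commute a b ∨ FreePair a b

@[simp] lemma pairHom_true {G : Type} [Group G] (a b : G) :
    pairHom a b (FreeGroup.of true) = a := by simp [pairHom]

@[simp] lemma pairHom_false {G : Type} [Group G] (a b : G) :
    pairHom a b (FreeGroup.of false) = b := by simp [pairHom]

lemma pairHom_ext {G : Type} [Group G] {f g : FreeGroup Bool →* G}
    (h1 : f (.of true) = g (.of true)) (h2 : f (.of false) = g (.of false)) : f = g := by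
  ext i; cases i
  · exact h2
  · exact h1

lemma map_pairHom {G H : Type} [Group G] [Group H] (f : G →* H) (a b : G) :
    f.comp (pairHom a b) = pairHom (f a) (f b) := pairHom_ext (by simp) (by simp)

lemma FreePair.of_map {G H : Type} [Group G] [Group H] (f : G →* H) {a b : G}
    (h : FreePair (f a) (f b)) : FreePair a b := by
  unfold FreePair at h
  rw [← map_pairHom] at h
  exact Function.Injective.of_comp (f := f) h

lemma FreePair.map {G H : Type} [Group G] [Group H] {f : G →* H} (hf : Function.Injective f)
    {a b : G} (h : FreePair a b) : FreePair (f a) (f b) := by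
  unfold FreePair
  rw [← map_pairHom]
  exact hf.comp h

lemma Good.of_injective {G H : Type} [Group G] [Group H] {f : G →* H} (hf : Function.Injective f)
    {a b : G} (h : Good (f a) (f b)) : Good a b := by
  rcases h with h | h
  · exact Or.inl (hf (by simpa using h.eq))
  · exact Or.inr (h.of_map f)

/-- Free pairs are insensitive to automorphisms of the free group of rank two: `(p, q)` is the
automorphism and `(u, v)` its inverse. -/
lemma FreePair.of_nielsen {G : Type} [Group G] {a b : G} (u v p q : FreeGroup Bool)
    (h : FreePair (pairHom a b p) (pairHom a b q))
    (hu : pairHom p q u = .of true) (hv : pairHom p q v = .of false)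
    (hp : pairHom u v p = .of true) (hq : pairHom u v q = .of false) : FreePair a b := by
  have h1 : (pairHom u v).comp (pairHom p q) = MonoidHom.id _ :=
    pairHom_ext (by simpa using hp) (by simpa using hq)
  have h2 : (pairHom p q).comp (pairHom u v) = MonoidHom.id _ :=
    pairHom_ext (by simpa using hu) (by simpa using hv)
  have h3 : pairHom a b = (pairHom (pairHom a b p) (pairHom a b q)).comp (pairHom u v) := by
    rw [← map_pairHom, MonoidHom.comp_assoc, h2, MonoidHom.comp_id]
  have h4 : Function.Injective (pairHom u v) := fun x y hxy => by
    have := congrArg (pairHom p q) hxy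
    simpa [← MonoidHom.comp_apply, h2] using this
  unfold FreePair
  rw [h3]
  exact h.comp h4

lemma FreePair.swap {G : Type} [Group G] {a b : G} (h : FreePair b a) : FreePair a b :=
  FreePair.of_nielsen (.of false) (.of true) (.of false) (.of true) (by simpa using h)
    (by simp) (by simp) (by simp) (by simp)

lemma FreePair.of_mul {G : Type} [Group G] {a b : G} (h : FreePair (a * b) b) : FreePair a b :=
  FreePair.of_nielsen (.of true * (.of false)⁻¹) (.of false) (.of true * .of false) (.of false)
    (by simpa using h) (by simp) (by simp) (by simp) (by simp)

lemma FreePair.of_mul_inv {G : Type} [Group G] {a b : G} (h : FreePair (a * b⁻¹) b) :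
    FreePair a b :=
  FreePair.of_nielsen (.of true * .of false) (.of false) (.of true * (.of false)⁻¹) (.of false)
    (by simpa using h) (by simp) (by simp) (by simp) (by simp)

lemma mag_of {X : Type} (x : X) : mag (FreeGroup.of x) = up x (unitSeries X) := by
  simp [mag, magnusAct, upEquiv]

lemma mag_of_mul {X : Type} (x : X) (w : FreeGroup X) : mag (FreeGroup.of x * w) = up x (mag w) := by
  simp [mag, magnusAct, upEquiv]

lemma conv_up_snoc {X : Type} (x z : X) (t : List X) (ε : List X → ℤ) :
    conv ε (up x (unitSeries X)) (t ++ [z]) = ε (t ++ [z]) + if z = x then ε t else 0 := by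
  induction t generalizing ε with
  | nil => simp [conv, up, unitSeries, add_comm]
  | cons y t ih =>
    simp [conv, ih, up, unitSeries]

/-- An element commuting with the letter `x` only has words ending in `x` in its expansion: compare
the coefficients of `x :: (t ++ [z])` on both sides. -/
lemma eq_of_commute_of {X : Type} {w : FreeGroup X} {x z : X} {t : List X}
    (h : Commute (FreeGroup.of x) w) (hm : mag w (t ++ [z]) ≠ 0) : z = x := by
  by_contra hz
  have h1 := congrFun (congrArg mag h.eq) (x :: (t ++ [z]))
  rw [mag_of_mul, mag_mul, mag_of, ← List.cons_append, conv_up_snoc] at h1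
  simp [up, hz] at h1
  exact hm h1

/-- Free groups of rank at least two have trivial center. -/
lemma eq_one_of_commute {X : Type} {w : FreeGroup X} {x y : X} (hxy : x ≠ y)
    (hx : Commute (FreeGroup.of x) w) (hy : Commute (FreeGroup.of y) w) : w = 1 := by
  by_contra hw
  obtain ⟨m, hm, hm'⟩ := exists_mag_ne_zero hw
  rw [← List.dropLast_append_getLast hm] at hm'
  exact hxy ((eq_of_commute_of hx hm').symm.trans (eq_of_commute_of hy hm'))

/-- A homomorphism with central kernel preserves free pairs, since the free group of rank two is
centerless. -/
lemma FreePair.map_of_central {G H : Type} [Group G] [Group H] {f : G →* H}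
    (hf : ∀ g, f g = 1 → ∀ h, Commute h g) {a b : G} (h : FreePair a b) : FreePair (f a) (f b) := by
  unfold FreePair
  rw [← map_pairHom, injective_iff_map_eq_one]
  intro w hw
  have hc := hf _ hw
  exact eq_one_of_commute (x := true) (y := false) (by simp)
    (h (by simpa only [map_mul] using (hc _).eq)) (h (by simpa only [map_mul] using (hc _).eq))

/-! ### Pairs in free groups -/

lemma commute_of_subsingleton {Y : Type} (hY : ∀ y z : Y, y = z) (u v : FreeGroup Y) :
    Commute u v := by
  induction u using FreeGroup.induction_on with
  | C1 => exact Commute.one_left _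
  | inv_of y h => exact h.inv_left
  | mul a b ha hb => exact ha.mul_left hb
  | of y =>
    induction v using FreeGroup.induction_on with
    | C1 => exact Commute.one_right _
    | inv_of z h => exact h.inv_right
    | mul a b ha hb => exact ha.mul_right hb
    | of z => rw [hY y z]

/-- Two elements generating a free group either commute or are a basis. When the rank is at least
two, a nonzero two-by-two minor of the matrix of linear Magnus coefficients is a unit because the
two rows generate, so the rows are linearly independent. -/
lemma good_of_surjective {Y : Type} {a b : FreeGroup Y}
    (h : Function.Surjective (pairHom a b)) : Good a b := by
  by_cases hY : ∀ y z : Y, y = z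
  · exact Or.inl (commute_of_subsingleton hY _ _)
  push Not at hY
  obtain ⟨y, z, hyz⟩ := hY
  right
  have hd : ∀ i : Bool, Deep 1 (cond i a b) := fun i => deep_zero _
  have hof : ∀ x t : Y, mag (FreeGroup.of x) [t] = if t = x then 1 else 0 := fun x t => by
    rw [mag_of]; simp [up, unitSeries]
  have hsum : ∀ (c : Bool →₀ ℤ) (l : List Y), (c.sum fun i k => k * mag (cond i a b) l) =
      c true * mag a l + c false * mag b l := fun c l => by
    rw [Finsupp.sum_fintype _ _ (by simp)]; simp
  have hval : ∀ x t : Y, ∃ c : Bool →₀ ℤ, ∀ t : Y, (if t = x then 1 else 0) =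
      c true * mag a [t] + c false * mag b [t] := fun x _ => by
    obtain ⟨w, hw⟩ := h (.of x)
    refine ⟨expo w, fun t => ?_⟩
    rw [← hsum, ← (mag_lift_lead hd w).2 [t] (by simp) (by simp), ← hof, ← hw]
    rfl
  refine lift_injective_of_indep (n := 1) (by simp) hd fun c hc => ?_
  have hc' : ∀ t : Y, c true * mag a [t] + c false * mag b [t] = 0 := fun t => by
    rw [← hsum]; exact hc [t] rfl
  obtain ⟨p, hp⟩ := hval y y
  obtain ⟨q, hq⟩ := hval z z
  have e1 := hp y
  have e2 := hp z
  have e3 := hq y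
  have e4 := hq z
  have f1 := hc' y
  have f2 := hc' z
  simp only [if_true, hyz, hyz.symm, if_false] at e1 e2 e3 e4
  generalize mag a [y] = a1 at *
  generalize mag a [z] = a2 at *
  generalize mag b [y] = b1 at *
  generalize mag b [z] = b2 at *
  generalize p true = p1 at *
  generalize p false = p2 at *
  generalize q true = q1 at *
  generalize q false = q2 at *
  have hdet : (p1 * q2 - p2 * q1) * (a1 * b2 - a2 * b1) = 1 := by
    linear_combination -(q1 * a2 + q2 * b2) * e1 + (q1 * a1 + q2 * b1) * e2 - e4
  ext i
  cases i
  · simp only [Finsupp.coe_zero, Pi.zero_apply]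
    linear_combination (p1 * q2 - p2 * q1) * (a1 * f2 - a2 * f1) - c false * hdet
  · simp only [Finsupp.coe_zero, Pi.zero_apply]
    linear_combination (p1 * q2 - p2 * q1) * (b2 * f1 - b1 * f2) - c true * hdet

/-- By Nielsen–Schreier the subgroup generated by two elements is itself free. -/
theorem good_freeGroup {X : Type} (a b : FreeGroup X) : Good a b := by
  let S := (pairHom a b).range
  let e : S ≃* FreeGroup (IsFreeGroup.Generators S) := IsFreeGroup.toFreeGroup S
  let π : FreeGroup Bool →* S := (pairHom a b).rangeRestrict
  have hπ : Function.Surjective π := (pairHom a b).rangeRestrict_surjective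
  have ha : S.subtype (π (.of true)) = a := pairHom_true a b
  have hb : S.subtype (π (.of false)) = b := pairHom_false a b
  have he : pairHom (e (π (.of true))) (e (π (.of false))) = e.toMonoidHom.comp π :=
    pairHom_ext (by simp) (by simp)
  have hg : Good (e.toMonoidHom (π (.of true))) (e.toMonoidHom (π (.of false))) :=
    good_of_surjective (by
      change Function.Surjective (pairHom (e (π (.of true))) (e (π (.of false))))
      rw [he]; exact e.surjective.comp hπ)
  have hg' := Good.of_injective e.injective hg
  rw [← ha, ← hb]
  rcases hg' with h | h
  · exact Or.inl (h.map S.subtype)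
  · exact Or.inr (h.map S.subtype_injective)

/-! ### Free pairs from normal forms in the free group of rank two -/

/-- If `b` dies under a homomorphism `ρ` that keeps `a` of infinite order, and the conjugates
`aⁱ b a⁻ⁱ` are free generators, then `a, b` is a free pair. Every word in `X, Y` is a product of
conjugates `Xⁱ Y^{±1} X⁻ⁱ` followed by a power of `X`. -/
lemma freePair_of_rank_one {G H : Type} [Group G] [Group H] {a b : G} (ρ : G →* H)
    (hb : ρ b = 1) (ha : ∀ n : ℤ, ρ a ^ n = 1 → n = 0)
    (hinj : Function.Injective
      (FreeGroup.lift fun i : Multiplicative ℤ => a ^ i.toAdd * b * (a ^ i.toAdd)⁻¹)) :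
    FreePair a b := by
  let X : FreeGroup Bool := .of true
  let Y : FreeGroup Bool := .of false
  let ψ := FreeGroup.lift fun i : Multiplicative ℤ => X ^ i.toAdd * Y * (X ^ i.toAdd)⁻¹
  have hψ : (pairHom a b).comp ψ =
      FreeGroup.lift fun i : Multiplicative ℤ => a ^ i.toAdd * b * (a ^ i.toAdd)⁻¹ := by
    ext i; simp [ψ, X, Y]
  have hψ1 : ∀ k, ρ (pairHom a b (ψ k)) = 1 := by
    intro k
    have : (ρ.comp (pairHom a b)).comp ψ = 1 := by ext i; simp [ψ, X, Y, hb]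
    exact DFunLike.congr_fun this k
  have hmem : ∀ i : ℤ, X ^ i * Y * (X ^ i)⁻¹ ∈ ψ.range := fun i =>
    ⟨.of (.ofAdd i), by simp [ψ]⟩
  have hconj : ∀ j : ℤ, ψ.range ≤ ψ.range.comap (MulAut.conj (X ^ j)).toMonoidHom := by
    intro j
    conv_lhs => rw [FreeGroup.range_lift_eq_closure]
    rw [Subgroup.closure_le]
    rintro _ ⟨i, rfl⟩
    change X ^ j * (X ^ i.toAdd * Y * (X ^ i.toAdd)⁻¹) * (X ^ j)⁻¹ ∈ ψ.range
    have := hmem (j + i.toAdd)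
    rwa [zpow_add, mul_inv_rev, show ∀ x y z : FreeGroup Bool, x * y * z * (y⁻¹ * x⁻¹) =
      x * (y * z * y⁻¹) * x⁻¹ from fun x y z => by group] at this
  let T : Set (FreeGroup Bool) := {w | ∃ n ∈ ψ.range, ∃ m : ℤ, w = n * X ^ m}
  have hTX : ∀ (j : ℤ), ∀ v ∈ T, X ^ j * v ∈ T := by
    rintro j _ ⟨n, hn, m, rfl⟩
    refine ⟨_, hconj j hn, j + m, ?_⟩
    change _ = X ^ j * n * (X ^ j)⁻¹ * _
    rw [zpow_add]; group
  have hTN : ∀ u ∈ ψ.range, ∀ v ∈ T, u * v ∈ T := by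
    rintro u hu _ ⟨n, hn, m, rfl⟩
    exact ⟨u * n, mul_mem hu hn, m, by group⟩
  have hY : Y ∈ ψ.range := by simpa using hmem 0
  have key : ∀ w : FreeGroup Bool, ∀ v ∈ T, w * v ∈ T := by
    intro w
    induction w using FreeGroup.induction_on with
    | C1 => simp
    | of i =>
      cases i
      · exact hTN Y hY
      · simpa using hTX 1
    | inv_of i _ =>
      cases i
      · exact hTN Y⁻¹ (inv_mem hY)
      · simpa using hTX (-1)
    | mul u v hu hv => intro t ht; rw [mul_assoc]; exact hu _ (hv _ ht)
  unfold FreePair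
  rw [injective_iff_map_eq_one]
  intro w hw
  obtain ⟨_, ⟨k, rfl⟩, m, hwk⟩ := key w 1 ⟨1, one_mem _, 0, by simp⟩
  rw [mul_one] at hwk
  have hm : m = 0 := by
    apply ha
    have := congrArg ρ hw
    rw [hwk, map_mul, map_mul, hψ1] at this
    simpa [X] using this
  have hk : k = 1 := by
    rw [hwk, hm, zpow_zero, mul_one] at hw
    rw [← MonoidHom.comp_apply, hψ] at hw
    exact (injective_iff_map_eq_one _).1 hinj k hw
  rw [hwk, hm, hk]; simp

/-- If `a, b` map to a basis of a free abelian group of rank two, and the conjugates of `⁅b, a⁆` by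
the elements `aⁱ bʲ` are free generators, then `a, b` is a free pair. Every word in `X, Y` is a
product of conjugates of `⁅Y, X⁆^{±1}` by elements `Xⁱ Yʲ`, followed by some `Xᵐ Yᵏ`. -/
lemma freePair_of_rank_two {G H : Type} [Group G] [Group H] {a b : G} (ρ : G →* H)
    (hab : Commute (ρ a) (ρ b)) (hind : ∀ m n : ℤ, ρ a ^ m * ρ b ^ n = 1 → m = 0 ∧ n = 0)
    (hinj : Function.Injective
      (FreeGroup.lift fun p : Multiplicative ℤ × Multiplicative ℤ =>
        a ^ p.1.toAdd * b ^ p.2.toAdd * ⁅b, a⁆ * (a ^ p.1.toAdd * b ^ p.2.toAdd)⁻¹)) :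
    FreePair a b := by
  let X : FreeGroup Bool := .of true
  let Y : FreeGroup Bool := .of false
  let ψ := FreeGroup.lift fun p : Multiplicative ℤ × Multiplicative ℤ =>
        X ^ p.1.toAdd * Y ^ p.2.toAdd * ⁅Y, X⁆ * (X ^ p.1.toAdd * Y ^ p.2.toAdd)⁻¹
  have hψ : (pairHom a b).comp ψ =
      FreeGroup.lift fun p : Multiplicative ℤ × Multiplicative ℤ =>
        a ^ p.1.toAdd * b ^ p.2.toAdd * ⁅b, a⁆ * (a ^ p.1.toAdd * b ^ p.2.toAdd)⁻¹ := by
    ext i; simp [ψ, X, Y, map_commutatorElement]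
  have hψ1 : ∀ k, ρ (pairHom a b (ψ k)) = 1 := by
    intro k
    have : (ρ.comp (pairHom a b)).comp ψ = 1 := by
      ext i
      simp [ψ, X, Y, map_commutatorElement, commutatorElement_eq_one_iff_commute.2 hab.symm]
    exact DFunLike.congr_fun this k
  have hmem : ∀ i j : ℤ, X ^ i * Y ^ j * ⁅Y, X⁆ * (X ^ i * Y ^ j)⁻¹ ∈ ψ.range := fun i j =>
    ⟨.of (.ofAdd i, .ofAdd j), by simp [ψ]⟩
  -- The commutators of `Y` and `Y⁻¹` with powers of `X` lie in the range of `ψ`.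
  have hstep : ∀ (Z : FreeGroup Bool), (∀ i : ℤ, X ^ i * ⁅Z, X⁆ * (X ^ i)⁻¹ ∈ ψ.range) →
      ∀ i : ℤ, ⁅Z, X ^ i⁆ ∈ ψ.range := by
    intro Z hZ i
    have hrec : ∀ i : ℤ, ⁅Z, X ^ (i + 1)⁆ = ⁅Z, X ^ i⁆ * (X ^ i * ⁅Z, X⁆ * (X ^ i)⁻¹) := by
      intro i
      simp only [commutatorElement_def, zpow_add, zpow_one]
      group
    induction i with
    | zero => simp
    | succ i ih => rw [hrec]; exact mul_mem ih (hZ _)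
    | pred i ih =>
      have := hrec (-i - 1)
      rw [sub_add_cancel] at this
      rw [this] at ih
      exact (Subgroup.mul_mem_cancel_right _ (hZ _)).1 ih
  have hY1 : ∀ i : ℤ, ⁅Y, X ^ i⁆ ∈ ψ.range := hstep Y fun i => by simpa using hmem i 0
  have hY2 : ∀ i : ℤ, ⁅Y⁻¹, X ^ i⁆ ∈ ψ.range := hstep Y⁻¹ fun i => by
    have := inv_mem (hmem i (-1))
    rwa [show (X ^ i * Y ^ (-1 : ℤ) * ⁅Y, X⁆ * (X ^ i * Y ^ (-1 : ℤ))⁻¹)⁻¹ =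
      X ^ i * ⁅Y⁻¹, X⁆ * (X ^ i)⁻¹ by simp only [commutatorElement_def]; group] at this
  have hconjX : ∀ j : ℤ, ψ.range ≤ ψ.range.comap (MulAut.conj (X ^ j)).toMonoidHom := by
    intro j
    conv_lhs => rw [FreeGroup.range_lift_eq_closure]
    rw [Subgroup.closure_le]
    rintro _ ⟨⟨i, k⟩, rfl⟩
    change X ^ j * (X ^ i.toAdd * Y ^ k.toAdd * ⁅Y, X⁆ * (X ^ i.toAdd * Y ^ k.toAdd)⁻¹) *
      (X ^ j)⁻¹ ∈ ψ.range
    have := hmem (j + i.toAdd) k.toAdd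
    rwa [zpow_add, show ∀ x y z w : FreeGroup Bool, x * y * w * z * (x * y * w)⁻¹ =
      x * (y * w * z * (y * w)⁻¹) * x⁻¹ from fun x y z w => by group] at this
  have hconjY : ∀ j : ℤ, (∀ i : ℤ, ⁅Y ^ j, X ^ i⁆ ∈ ψ.range) →
      ψ.range ≤ ψ.range.comap (MulAut.conj (Y ^ j)).toMonoidHom := by
    intro j hj
    conv_lhs => rw [FreeGroup.range_lift_eq_closure]
    rw [Subgroup.closure_le]
    rintro _ ⟨⟨i, k⟩, rfl⟩
    change Y ^ j * (X ^ i.toAdd * Y ^ k.toAdd * ⁅Y, X⁆ * (X ^ i.toAdd * Y ^ k.toAdd)⁻¹) *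
      (Y ^ j)⁻¹ ∈ ψ.range
    have h1 := hmem i.toAdd (j + k.toAdd)
    have h2 := mul_mem (mul_mem (hj i.toAdd) h1) (inv_mem (hj i.toAdd))
    rw [zpow_add] at h2
    convert h2 using 1
    generalize X ^ i.toAdd = x
    generalize Y ^ j = y
    generalize Y ^ k.toAdd = z
    generalize ⁅Y, X⁆ = c
    simp only [commutatorElement_def]; group
  let T : Set (FreeGroup Bool) := {w | ∃ n ∈ ψ.range, ∃ m k : ℤ, w = n * X ^ m * Y ^ k}
  have hTX : ∀ (j : ℤ), ∀ v ∈ T, X ^ j * v ∈ T := by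
    rintro j _ ⟨n, hn, m, k, rfl⟩
    refine ⟨_, hconjX j hn, j + m, k, ?_⟩
    change _ = X ^ j * n * (X ^ j)⁻¹ * _ * _
    rw [zpow_add]; group
  have hTY : ∀ j : ℤ, (∀ i : ℤ, ⁅Y ^ j, X ^ i⁆ ∈ ψ.range) → ∀ v ∈ T, Y ^ j * v ∈ T := by
    rintro j hj _ ⟨n, hn, m, k, rfl⟩
    refine ⟨_, mul_mem (hconjY j hj hn) (hj m), m, j + k, ?_⟩
    change _ = Y ^ j * n * (Y ^ j)⁻¹ * _ * _ * _
    simp only [commutatorElement_def, zpow_add]; group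
  have key : ∀ w : FreeGroup Bool, ∀ v ∈ T, w * v ∈ T := by
    intro w
    induction w using FreeGroup.induction_on with
    | C1 => simp
    | of i =>
      cases i
      · simpa using hTY 1 (by simpa using hY1)
      · simpa using hTX 1
    | inv_of i _ =>
      cases i
      · simpa using hTY (-1) (by simpa using hY2)
      · simpa using hTX (-1)
    | mul u v hu hv => intro t ht; rw [mul_assoc]; exact hu _ (hv _ ht)
  unfold FreePair
  rw [injective_iff_map_eq_one]
  intro w hw
  obtain ⟨_, ⟨k, rfl⟩, m, n, hwk⟩ := key w 1 ⟨1, one_mem _, 0, 0, by simp⟩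
  rw [mul_one] at hwk
  obtain ⟨hm, hn⟩ : m = 0 ∧ n = 0 := by
    apply hind
    have := congrArg ρ hw
    rw [hwk, map_mul, map_mul, map_mul, map_mul, hψ1] at this
    simpa [X, Y] using this
  have hk : k = 1 := by
    rw [hwk, hm, hn, zpow_zero, zpow_zero, mul_one, mul_one] at hw
    rw [← MonoidHom.comp_apply, hψ] at hw
    exact (injective_iff_map_eq_one _).1 hinj k hw
  rw [hwk, hm, hn, hk]; simp

/-! ### Permutational semidirect products -/

/-- The permutational semidirect product `FreeGroup X ⋊ K`, where `K` permutes the basis `X`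
through `θ`. -/
abbrev WP {X K : Type} [Group K] (θ : K →* Equiv.Perm X) : Type :=
  FreeGroup X ⋊[(pa X).comp θ] K

lemma hom_eq_of_gen {X H : Type} [Group H] {f g : FreeGroup X →* H}
    (h : ∀ x, f (FreeGroup.of x) = g (FreeGroup.of x)) : f = g := FreeGroup.ext_hom _ _ h

lemma WP.conj_inl {X K : Type} [Group K] {θ : K →* Equiv.Perm X} (g : WP θ) (w : FreeGroup X) :
    g * SemidirectProduct.inl w * g⁻¹ =
      SemidirectProduct.inl (g.left * pa X (θ g.right) w * g.left⁻¹) := by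
  ext
  · simp
  · simp

lemma WP.eq_inl {X K : Type} [Group K] {θ : K →* Equiv.Perm X} {g : WP θ} (h : g.right = 1) :
    g = SemidirectProduct.inl g.left := by
  ext
  · simp
  · simp [h]

lemma WP.commutator_eq {X K : Type} [Group K] {θ : K →* Equiv.Perm X} {a b : WP θ}
    (h : Commute a.right b.right) : ⁅b, a⁆ = SemidirectProduct.inl ⁅b, a⁆.left := by
  apply WP.eq_inl
  change SemidirectProduct.rightHom ⁅b, a⁆ = 1
  rw [map_commutatorElement, commutatorElement_eq_one_iff_commute]
  exact h.symm

/-- A central element of `K` that fixes the basis pointwise is central in the semidirect product. -/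
lemma WP.commute_of_trivial {X K : Type} [Group K] {θ : K →* Equiv.Perm X} {g : WP θ}
    (h1 : g.left = 1) (h2 : ∀ x, θ g.right x = x) (h3 : ∀ k, Commute k g.right) (h : WP θ) :
    Commute h g := by
  have : θ g.right = 1 := Equiv.ext h2
  refine SemidirectProduct.ext ?_ ?_
  · simp [h1, this]
  · simpa using (h3 _).eq

/-- The map of semidirect products induced by a homomorphism `f` of acting groups. -/
def WP.mapK {X K L : Type} [Group K] [Group L] {θ : K →* Equiv.Perm X} {η : L →* Equiv.Perm X}
    (f : K →* L) (h : ∀ k, η (f k) = θ k) : WP θ →* WP η :=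
  SemidirectProduct.map (MonoidHom.id _) f fun k => by
    ext x; simp [h]

@[simp] lemma WP.mapK_left {X K L : Type} [Group K] [Group L] {θ : K →* Equiv.Perm X}
    {η : L →* Equiv.Perm X} (f : K →* L) (h : ∀ k, η (f k) = θ k) (g : WP θ) :
    (WP.mapK f h g).left = g.left := rfl

@[simp] lemma WP.mapK_right {X K L : Type} [Group K] [Group L] {θ : K →* Equiv.Perm X}
    {η : L →* Equiv.Perm X} (f : K →* L) (h : ∀ k, η (f k) = θ k) (g : WP θ) :
    (WP.mapK f h g).right = f g.right := rfl

/-- Version of `orbit_free` inside the semidirect product: conjugates of an element of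
`FreeGroup X` by elements lying over an abelian group `A`. -/
theorem WP.orbit_free {X K A : Type} [Group K] [CommGroup A] [NoZeroDivisors (MonoidAlgebra ℤ A)]
    {θ : K →* Equiv.Perm X} (κ : A →* K) (γ : A → WP θ) (hγ : ∀ α, (γ α).right = κ α)
    {w : FreeGroup X} {m : List X} (hm0 : m ≠ []) (hw : Deep m.length w) (hm : mag w m ≠ 0)
    (hstab : ∀ α : A, (∀ x ∈ m, θ (κ α) x = x) → α = 1) :
    Function.Injective
      (FreeGroup.lift fun α => γ α * (SemidirectProduct.inl w : WP θ) * (γ α)⁻¹) := by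
  have h := RaagTwo.orbit_free (θ.comp κ) hm0 hw hm hstab fun α => (γ α).left
  have : (FreeGroup.lift fun α => γ α * (SemidirectProduct.inl w : WP θ) * (γ α)⁻¹) =
      (SemidirectProduct.inl : FreeGroup X →* WP θ).comp
      (FreeGroup.lift fun α => (γ α).left * pa X (θ.comp κ α) w * ((γ α).left)⁻¹) := by
    apply hom_eq_of_gen
    intro α
    rw [FreeGroup.lift_apply_of, MonoidHom.comp_apply, FreeGroup.lift_apply_of, WP.conj_inl, hγ]
    rfl
  rw [this]
  exact SemidirectProduct.inl_injective.comp h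

/-- A nontrivial `b` in `FreeGroup X` and an element `a` whose nonzero powers move every basis
element form a free pair. -/
lemma freePair_base {X K : Type} [Group K] {θ : K →* Equiv.Perm X} {a b : WP θ}
    (hb : b.right = 1) (hb1 : b ≠ 1) (ha : ∀ (x : X) (n : ℤ), θ (a.right ^ n) x = x → n = 0) :
    FreePair a b := by
  have hbl := WP.eq_inl hb
  have hg : b.left ≠ 1 := fun h => hb1 (by rw [hbl, h, map_one])
  obtain ⟨m, hm0, hm, hw⟩ := exists_lead hg
  have hright : ∀ n : ℤ, (a ^ n).right = a.right ^ n := fun n =>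
    map_zpow (SemidirectProduct.rightHom : WP θ →* K) a n
  obtain ⟨x, hx⟩ := List.exists_mem_of_ne_nil m hm0
  refine freePair_of_rank_one (SemidirectProduct.rightHom : WP θ →* K) hb ?_ ?_
  · intro n hn
    refine ha x n ?_
    rw [show a.right ^ n = 1 from hn, map_one]; rfl
  · have := WP.orbit_free (zpowersHom K a.right) (fun i => a ^ i.toAdd) (fun i => hright _)
      hm0 hw hm fun α hα => ha x α.toAdd (hα x hx)
    rwa [← hbl] at this

/-- Suppose all basis elements have the same stabilizer, the kernel of a character `τ` with values
in `ℤ`. The Euclidean algorithm on the values of `τ` replaces `a, b` by Nielsen moves until `b` acts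
trivially; then either `a` acts trivially too and both elements may be taken in a free group, or
`freePair_base` applies. -/
lemma freePair_of_char {X A : Type} [CommGroup A] {θ : A →* Equiv.Perm X}
    (τ : A →* Multiplicative ℤ) (hτ : ∀ x z, θ z x = x ↔ τ z = 1) (N : ℕ) : ∀ a b : WP θ,
    (τ a.right).toAdd.natAbs + (τ b.right).toAdd.natAbs = N → ¬ Commute a b → FreePair a b := by
  have base : ∀ a b : WP θ, τ b.right = 1 → ¬ Commute a b → FreePair a b := by
    intro a b hb hab
    have hbt : ∀ x, θ b.right x = x := fun x => (hτ x _).2 hb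
    have hbt' : θ b.right = 1 := Equiv.ext hbt
    have hbl : b.left ≠ 1 := fun h =>
      hab (WP.commute_of_trivial h hbt (fun k => Commute.all _ _) a)
    apply FreePair.of_map (WP.mapK θ (η := MonoidHom.id _) fun k => rfl)
    by_cases ha : τ a.right = 1
    · have hat : θ a.right = 1 := Equiv.ext fun x => (hτ x _).2 ha
      have ea : WP.mapK θ (η := MonoidHom.id _) (fun k => rfl) a = SemidirectProduct.inl a.left :=
        SemidirectProduct.ext rfl hat
      have eb : WP.mapK θ (η := MonoidHom.id _) (fun k => rfl) b = SemidirectProduct.inl b.left :=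
        SemidirectProduct.ext rfl hbt'
      rw [ea, eb]
      refine FreePair.map SemidirectProduct.inl_injective
        ((good_freeGroup _ _).resolve_left fun hc => hab ?_)
      refine SemidirectProduct.ext ?_ (mul_comm _ _)
      simpa [hat, hbt'] using hc.eq
    · refine freePair_base hbt' (fun h => hbl (congrArg SemidirectProduct.left h)) ?_
      intro x n hn
      have : θ (a.right ^ n) x = x := by rw [map_zpow]; exact hn
      rw [hτ, map_zpow] at this
      by_contra hn0
      exact ha ((IsMulTorsionFree.zpow_eq_one_iff_left hn0).1 this)
  induction N using Nat.strong_induction_on with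
  | _ N ih =>
  have red : ∀ a b : WP θ, (τ a.right).toAdd.natAbs + (τ b.right).toAdd.natAbs = N →
      ¬ Commute a b → (τ b.right).toAdd.natAbs ≤ (τ a.right).toAdd.natAbs → FreePair a b := by
    intro a b hN hab hle
    by_cases hb : τ b.right = 1
    · exact base a b hb hab
    have hb0 : (τ b.right).toAdd ≠ 0 := fun h => hb (by simpa using h)
    have h1 : (τ (a * b).right).toAdd = (τ a.right).toAdd + (τ b.right).toAdd := by simp
    have h2 : (τ (a * b⁻¹).right).toAdd = (τ a.right).toAdd - (τ b.right).toAdd := by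
      simp [sub_eq_add_neg]
    have h3 : (τ (a * b).right).toAdd.natAbs < (τ a.right).toAdd.natAbs ∨
        (τ (a * b⁻¹).right).toAdd.natAbs < (τ a.right).toAdd.natAbs := by omega
    rcases h3 with h3 | h3
    · refine FreePair.of_mul (ih _ ?_ _ _ rfl fun hc => hab ?_)
      · omega
      · simpa using hc.mul_left (Commute.refl b).inv_left
    · refine FreePair.of_mul_inv (ih _ ?_ _ _ rfl fun hc => hab ?_)
      · omega
      · simpa using hc.mul_left (Commute.refl b)
  intro a b hN hab
  rcases le_total (τ b.right).toAdd.natAbs (τ a.right).toAdd.natAbs with h | h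
  · exact red a b hN hab h
  · exact FreePair.swap (red b a (by omega) (fun hc => hab hc.symm) h)

/-! ### Commuting acting elements without a common fixed point -/

/-- The free abelian group of rank two, written multiplicatively. -/
abbrev A2 : Type := Multiplicative ℤ × Multiplicative ℤ

/-- The first basis element of `A2`. -/
def e1 : A2 := (.ofAdd 1, 1)

/-- The second basis element of `A2`. -/
def e2 : A2 := (1, .ofAdd 1)

lemma e_zpow (i j : ℤ) : e1 ^ i * e2 ^ j = (.ofAdd i, .ofAdd j) := by
  simp [e1, e2, ← ofAdd_zsmul]

/-- If a leading word of the commutator of `a` and `b` has trivial pointwise stabilizer in `A2`,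
then `a, b` is a free pair. -/
lemma freePair_rank_two {X : Type} {θ : A2 →* Equiv.Perm X} {a b : WP θ}
    (ha : a.right = e1) (hb : b.right = e2) {m : List X} (hm0 : m ≠ [])
    (hw : Deep m.length ⁅b, a⁆.left) (hm : mag ⁅b, a⁆.left m ≠ 0)
    (hstab : ∀ α : A2, (∀ x ∈ m, θ α x = x) → α = 1) : FreePair a b := by
  have hzp : ∀ i j : ℤ, (a ^ i * b ^ j).right = e1 ^ i * e2 ^ j := fun i j => by
    change SemidirectProduct.rightHom (a ^ i * b ^ j) = _
    rw [map_mul, map_zpow, map_zpow]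
    change a.right ^ i * b.right ^ j = _
    rw [ha, hb]
  have hc := WP.commutator_eq (a := a) (b := b) (Commute.all _ _)
  refine freePair_of_rank_two (SemidirectProduct.rightHom : WP θ →* A2) (Commute.all _ _) ?_ ?_
  · intro i j h
    change a.right ^ i * b.right ^ j = 1 at h
    rw [ha, hb, e_zpow, Prod.ext_iff] at h
    simpa using h
  · have := WP.orbit_free (MonoidHom.id A2) (fun p => a ^ p.1.toAdd * b ^ p.2.toAdd)
      (fun p => by rw [hzp, e_zpow]; rfl) hm0 hw hm hstab
    rwa [← hc] at this

/-- Point stabilizers are closed under roots: if a nonzero power of `k` fixes `x`, so does `k`. -/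
def RootClosed {X K : Type} [Group K] (θ : K →* Equiv.Perm X) : Prop :=
  ∀ (k : K) (x : X) (n : ℕ), n ≠ 0 → θ (k ^ n) x = x → θ k x = x

lemma RootClosed.zpow {X K : Type} [Group K] {θ : K →* Equiv.Perm X} (h : RootClosed θ)
    {k : K} {x : X} {n : ℤ} (hn : n ≠ 0) (hx : θ (k ^ n) x = x) : θ k x = x := by
  refine h k x n.natAbs (by omega) ?_
  rcases Int.natAbs_eq n with h' | h'
  · rw [h', zpow_natCast] at hx; exact hx
  · rw [h', zpow_neg, map_inv, Equiv.Perm.inv_eq_iff_eq, zpow_natCast] at hx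
    exact hx.symm

lemma fix_zpow {X K : Type} [Group K] {θ : K →* Equiv.Perm X} {k : K} {x : X}
    (h : θ k x = x) (n : ℤ) : θ (k ^ n) x = x := by
  rw [map_zpow]
  exact Function.IsFixedPt.perm_zpow h n

lemma fix_mul {X K : Type} [Group K] {θ : K →* Equiv.Perm X} {k l : K} {x : X}
    (h : θ k x = x) (h' : θ l x = x) : θ (k * l) x = x := by
  rw [map_mul, Equiv.Perm.mul_apply, h', h]

/-- The action on an invariant subset of the basis. -/
def restr {X K : Type} [Group K] (θ : K →* Equiv.Perm X) (p : X → Prop)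
    (hp : ∀ k x, p (θ k x) ↔ p x) : K →* Equiv.Perm {x // p x} where
  toFun k := (θ k).subtypePerm (hp k)
  map_one' := by ext; simp
  map_mul' k l := Equiv.ext fun x =>
    Subtype.ext (congrArg (fun s : Equiv.Perm X => s x) (map_mul θ k l))

@[simp] lemma restr_coe {X K : Type} [Group K] (θ : K →* Equiv.Perm X) (p : X → Prop)
    (hp : ∀ k x, p (θ k x) ↔ p x) (k : K) (x : {x // p x}) :
    (restr θ p hp k x : X) = θ k x := rfl

lemma retr_of {X : Type} {p : X → Prop} {x : X} (h : p x) :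
    retr (Subtype.val : {x // p x} → X) (.of x) = .of ⟨x, h⟩ := by
  have hx : ∃ y : {x // p x}, y.val = x := ⟨⟨x, h⟩, rfl⟩
  rw [retr, FreeGroup.lift_apply_of, dif_pos hx]
  exact congrArg _ (Subtype.ext hx.choose_spec)

lemma retr_of_not {X : Type} {p : X → Prop} {x : X} (h : ¬ p x) :
    retr (Subtype.val : {x // p x} → X) (.of x) = 1 := by
  have hx : ¬ ∃ y : {x // p x}, y.val = x := fun ⟨y, hy⟩ => h (hy ▸ y.2)
  rw [retr, FreeGroup.lift_apply_of, dif_neg hx]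

/-- The retraction of semidirect products that kills the basis elements outside an invariant subset. -/
def WP.restr {X K : Type} [Group K] (θ : K →* Equiv.Perm X) (p : X → Prop)
    (hp : ∀ k x, p (θ k x) ↔ p x) : WP θ →* WP (restr θ p hp) :=
  SemidirectProduct.map (retr Subtype.val) (MonoidHom.id K) fun k => by
    apply hom_eq_of_gen
    intro x
    change retr Subtype.val (pa X (θ k) (.of x)) =
      pa _ (RaagTwo.restr θ p hp k) (retr Subtype.val (.of x))
    rw [pa_of]
    by_cases h : p x
    · rw [retr_of h, retr_of ((hp k x).2 h), pa_of]; rfl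
    · rw [retr_of_not h, retr_of_not (mt (hp k x).1 h), map_one]

/-- The alternative for `a, b` lying over the standard basis of `A2`, when the root-closed action of
`A2` has no global fixed point. Take a leading word `m` of `⁅b, a⁆`. If its pointwise stabilizer is
trivial, `freePair_rank_two` applies. Otherwise some `k ≠ 1` fixes all letters of `m`; on the basis
elements fixed by `k` every stabilizer is the same, namely the elements proportional to `k`, so
`freePair_of_char` applies after killing the other basis elements. The commutator survives because
its leading word does. -/
theorem good_of_no_fixed {X : Type} {θ : A2 →* Equiv.Perm X} (hθ : RootClosed θ)
    (hfix : ∀ x, ∃ k, θ k x ≠ x) {a b : WP θ} (ha : a.right = e1) (hb : b.right = e2) :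
    Good a b := by
  by_cases hab : Commute a b
  · exact Or.inl hab
  right
  have hc := WP.commutator_eq (a := a) (b := b) (Commute.all _ _)
  have hc0 : ⁅b, a⁆.left ≠ 1 := fun h => hab <| by
    rw [h, map_one, commutatorElement_eq_one_iff_commute] at hc
    exact hc.symm
  obtain ⟨m, hm0, hm, hw⟩ := exists_lead hc0
  by_cases hstab : ∀ α : A2, (∀ x ∈ m, θ α x = x) → α = 1
  · exact freePair_rank_two ha hb hm0 hw hm hstab
  push Not at hstab
  obtain ⟨k, hk, hk1⟩ := hstab
  have hcoord : ∀ z : A2, z = (.ofAdd z.1.toAdd, .ofAdd z.2.toAdd) := fun z => rfl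
  have hzpow : ∀ (z : A2) (n : ℤ), z ^ n = (.ofAdd (n * z.1.toAdd), .ofAdd (n * z.2.toAdd)) := by
    intro z n
    refine Prod.ext ?_ ?_ <;> apply Multiplicative.toAdd.injective <;> simp [mul_comm]
  let p : X → Prop := fun x => θ k x = x
  have hp : ∀ z x, p (θ z x) ↔ p x := by
    intro z x
    change θ k (θ z x) = θ z x ↔ θ k x = x
    rw [← Equiv.Perm.mul_apply, ← map_mul, mul_comm, map_mul, Equiv.Perm.mul_apply,
      (θ z).injective.eq_iff]
  -- `τ z` is the determinant of `z` and `k`, so `τ z = 1` says that `z` and `k` are proportional.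
  let τ : A2 →* Multiplicative ℤ :=
    { toFun := fun z => .ofAdd (z.1.toAdd * k.2.toAdd - z.2.toAdd * k.1.toAdd)
      map_one' := by simp
      map_mul' := fun z z' => by
        rw [← ofAdd_add]; congr 1; simp; ring }
  have hτ : ∀ (x : {x // p x}) z, restr θ p hp z x = x ↔ τ z = 1 := by
    intro x z
    rw [Subtype.ext_iff, restr_coe]
    have hkx : θ k x = x := x.2
    have hτz : τ z = 1 ↔ z.1.toAdd * k.2.toAdd - z.2.toAdd * k.1.toAdd = 0 := Iff.rfl
    rw [hτz]
    constructor
    · intro hz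
      by_contra hD
      obtain ⟨v, hv⟩ := hfix x
      refine hv (hθ.zpow hD ?_)
      -- Cramer: if `z` and `k` were independent, a power of any `v` would lie in their span.
      have : v ^ (z.1.toAdd * k.2.toAdd - z.2.toAdd * k.1.toAdd) =
          z ^ (v.1.toAdd * k.2.toAdd - v.2.toAdd * k.1.toAdd) *
          k ^ (z.1.toAdd * v.2.toAdd - z.2.toAdd * v.1.toAdd) := by
        rw [hzpow, hzpow, hzpow, Prod.mk_mul_mk, ← ofAdd_add, ← ofAdd_add]
        congr 2 <;> ring
      rw [this]
      exact fix_mul (fix_zpow hz _) (fix_zpow hkx _)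
    · intro hD
      have h1 : z ^ k.1.toAdd = k ^ z.1.toAdd := by
        rw [hzpow, hzpow]; congr 2 <;> linarith
      have h2 : z ^ k.2.toAdd = k ^ z.2.toAdd := by
        rw [hzpow, hzpow]; congr 2 <;> linarith
      by_cases hk2 : k.1.toAdd = 0
      · have hk3 : k.2.toAdd ≠ 0 := fun h => hk1 (by
          rw [hcoord k, hk2, h]; rfl)
        exact hθ.zpow hk3 (h2 ▸ fix_zpow hkx _)
      · exact hθ.zpow hk2 (h1 ▸ fix_zpow hkx _)
  apply FreePair.of_map (WP.restr θ p hp)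
  refine freePair_of_char τ hτ _ _ _ rfl fun hcm => ?_
  have h1 : WP.restr θ p hp ⁅b, a⁆ = 1 := by
    rw [map_commutatorElement, commutatorElement_eq_one_iff_commute]; exact hcm.symm
  have h2 : retr (Subtype.val : {x // p x} → X) ⁅b, a⁆.left = 1 := congrArg SemidirectProduct.left h1
  have h3 : (m.attach.map fun x => (⟨x.1, hk x.1 x.2⟩ : {x // p x})).map Subtype.val = m := by
    simp [List.map_map, Function.comp_def]
  rw [← h3, ← mag_retr Subtype.val_injective, h2, mag_one] at hm
  simp [unitSeries, hm0] at hm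

/-- The homomorphism from `A2` determined by two commuting elements. -/
def zhom {K : Type} [Group K] {s t : K} (h : Commute s t) : A2 →* K :=
  MonoidHom.noncommCoprod (zpowersHom K s) (zpowersHom K t) fun i j => by
    simpa using h.zpow_zpow i.toAdd j.toAdd

@[simp] lemma zhom_e1 {K : Type} [Group K] {s t : K} (h : Commute s t) : zhom h e1 = s := by
  simp [zhom, e1]

@[simp] lemma zhom_e2 {K : Type} [Group K] {s t : K} (h : Commute s t) : zhom h e2 = t := by
  simp [zhom, e2]

/-- When the acting parts of `a` and `b` commute, the acting group may be replaced by `A2`: the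
kernel of the comparison map is central, and free pairs survive central quotients. -/
lemma good_of_pullback {X K : Type} [Group K] {θ : K →* Equiv.Perm X} {a b : WP θ}
    (h : Commute a.right b.right)
    (H : ∀ a' b' : WP (θ.comp (zhom h)), a'.right = e1 → b'.right = e2 → Good a' b') :
    Good a b := by
  let F : WP (θ.comp (zhom h)) →* WP θ := WP.mapK (zhom h) fun k => rfl
  let a' : WP (θ.comp (zhom h)) := ⟨a.left, e1⟩
  let b' : WP (θ.comp (zhom h)) := ⟨b.left, e2⟩
  have ha : F a' = a := SemidirectProduct.ext rfl (zhom_e1 h)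
  have hb : F b' = b := SemidirectProduct.ext rfl (zhom_e2 h)
  suffices Good (F a') (F b') by rwa [ha, hb] at this
  rcases H a' b' rfl rfl with hg | hg
  · exact Or.inl (hg.map F)
  · refine Or.inr (FreePair.map_of_central (fun g hg1 => ?_) hg)
    refine WP.commute_of_trivial (congrArg SemidirectProduct.left hg1) (fun x => ?_)
      (fun k => Commute.all _ _)
    have : zhom h g.right = 1 := congrArg SemidirectProduct.right hg1
    simp [this]

lemma RootClosed.comp {X K L : Type} [Group K] [Group L] {θ : K →* Equiv.Perm X}
    (h : RootClosed θ) (f : L →* K) : RootClosed (θ.comp f) := fun k x n hn hx => by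
  rw [MonoidHom.comp_apply, map_pow] at hx
  exact h _ _ n hn hx

theorem good_of_no_common_fixed {X K : Type} [Group K] {θ : K →* Equiv.Perm X}
    (hθ : RootClosed θ) {a b : WP θ} (h : Commute a.right b.right)
    (hfix : ∀ x, ¬ (θ a.right x = x ∧ θ b.right x = x)) : Good a b := by
  refine good_of_pullback h fun a' b' ha hb => good_of_no_fixed (hθ.comp _) (fun x => ?_) ha hb
  by_contra hx
  push Not at hx
  exact hfix x ⟨by simpa using hx e1, by simpa using hx e2⟩

/-- The universal property of the permutational semidirect product. -/
def WP.lift {X K H : Type} [Group K] [Group H] {θ : K →* Equiv.Perm X} (f : X → H) (g : K →* H)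
    (h : ∀ k x, f (θ k x) = g k * f x * (g k)⁻¹) : WP θ →* H :=
  SemidirectProduct.lift (FreeGroup.lift f) g fun k => by
    apply hom_eq_of_gen
    intro x
    change FreeGroup.lift f (pa X (θ k) (.of x)) = g k * FreeGroup.lift f (.of x) * (g k)⁻¹
    rw [pa_of, FreeGroup.lift_apply_of, FreeGroup.lift_apply_of, h]

@[simp] lemma WP.lift_inl {X K H : Type} [Group K] [Group H] {θ : K →* Equiv.Perm X} (f : X → H)
    (g : K →* H) (h : ∀ k x, f (θ k x) = g k * f x * (g k)⁻¹) (w : FreeGroup X) :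
    WP.lift f g h (SemidirectProduct.inl w : WP θ) = FreeGroup.lift f w :=
  SemidirectProduct.lift_inl _ _ _ _

@[simp] lemma WP.lift_inr {X K H : Type} [Group K] [Group H] {θ : K →* Equiv.Perm X} (f : X → H)
    (g : K →* H) (h : ∀ k x, f (θ k x) = g k * f x * (g k)⁻¹) (k : K) :
    WP.lift f g h (SemidirectProduct.inr k : WP θ) = g k :=
  SemidirectProduct.lift_inr _ _ _ _

lemma WP.hom_ext {X K H : Type} [Group K] [Group H] {θ : K →* Equiv.Perm X} {f g : WP θ →* H}
    (h1 : ∀ x, f (SemidirectProduct.inl (.of x)) = g (SemidirectProduct.inl (.of x)))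
    (h2 : ∀ k, f (SemidirectProduct.inr k) = g (SemidirectProduct.inr k)) : f = g :=
  SemidirectProduct.hom_ext (hom_eq_of_gen h1) (MonoidHom.ext h2)

/-! ### Absorbing fixed basis elements into the acting group -/

section Fixed

variable {X K : Type} [Group K] (θ : K →* Equiv.Perm X)

/-- A basis element fixed by the whole acting group. -/
def Fixed (x : X) : Prop := ∀ k, θ k x = x

lemma fixed_iff (k : K) (x : X) : Fixed θ (θ k x) ↔ Fixed θ x := by
  constructor
  · intro h
    have h1 := h k⁻¹
    rw [← Equiv.Perm.mul_apply, ← map_mul, inv_mul_cancel, map_one] at h1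
    have h1 : x = θ k x := h1
    rwa [← h1] at h
  · intro h
    rw [h k]; exact h

/-- The action on the basis elements that are not fixed. -/
def movedAct : K →* Equiv.Perm {x // ¬ Fixed θ x} :=
  restr θ (fun x => ¬ Fixed θ x) fun k x => not_congr (fixed_iff θ k x)

/-- The projection onto the free group on the fixed basis elements. -/
def fixedProj : WP θ →* FreeGroup {x // Fixed θ x} :=
  SemidirectProduct.lift (retr Subtype.val) 1 fun k => by
    apply hom_eq_of_gen
    intro x
    change retr Subtype.val (pa X (θ k) (.of x)) = 1 * retr Subtype.val (.of x) * 1⁻¹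
    rw [pa_of, one_mul, inv_one, mul_one]
    by_cases h : Fixed θ x
    · rw [h k]
    · rw [retr_of_not h, retr_of_not (mt (fixed_iff θ k x).1 h)]

/-- The action of `FreeGroup Fixed × K` on `FreeGroup Fixed × Moved`, by left translation on the
first factor and through `θ` on the second. The pair `(w, x)` stands for the conjugate `w x w⁻¹` in
`FreeGroup X`; these conjugates are a basis of the kernel of the projection to `FreeGroup Fixed`. -/
def peelAct : FreeGroup {x // Fixed θ x} × K →*
    Equiv.Perm (FreeGroup {x // Fixed θ x} × {x // ¬ Fixed θ x}) where
  toFun g := Equiv.prodCongr (Equiv.mulLeft g.1) (movedAct θ g.2)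
  map_one' := by ext x <;> simp
  map_mul' g h := by ext x <;> simp [mul_assoc]

@[simp] lemma peelAct_apply (g x) :
    peelAct θ g x = (g.1 * x.1, movedAct θ g.2 x.2) := rfl

/-- The homomorphism from `FreeGroup X ⋊ K` to `FreeGroup (FreeGroup Fixed × Moved) ⋊
(FreeGroup Fixed × K)` that moves the fixed basis elements into the acting group. -/
def peel : WP θ →* WP (peelAct θ) :=
  WP.lift (fun x => if h : Fixed θ x
      then SemidirectProduct.inr (.of ⟨x, h⟩, 1)
      else SemidirectProduct.inl (.of (1, ⟨x, h⟩)))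
    (SemidirectProduct.inr.comp (MonoidHom.inr _ _)) fun k x => by
      change _ = SemidirectProduct.inr (1, k) * _ * (SemidirectProduct.inr (1, k))⁻¹
      by_cases h : Fixed θ x
      · simp only [h k, dif_pos h]
        rw [← map_mul, ← map_inv, ← map_mul]
        simp
      · rw [dif_neg h, dif_neg (mt (fixed_iff θ k x).1 h), WP.conj_inl]
        simp
        rfl

/-- The inclusion of the free group on the fixed basis elements. -/
def fixedIncl : FreeGroup {x // Fixed θ x} →* FreeGroup X := FreeGroup.map Subtype.val

lemma pa_fixedIncl (k : K) (w : FreeGroup {x // Fixed θ x}) :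
    pa X (θ k) (fixedIncl θ w) = fixedIncl θ w := by
  have : (pa X (θ k)).toMonoidHom.comp (fixedIncl θ) = fixedIncl θ := by
    apply hom_eq_of_gen
    rintro ⟨x, hx⟩
    change pa X (θ k) (FreeGroup.map Subtype.val (.of _)) = FreeGroup.map Subtype.val (.of _)
    rw [FreeGroup.map.of, pa_of, hx k]
  exact DFunLike.congr_fun this w

lemma commute_fixedIncl (w : FreeGroup {x // Fixed θ x}) (k : K) :
    Commute (SemidirectProduct.inl (fixedIncl θ w) : WP θ) (SemidirectProduct.inr k) := by
  refine SemidirectProduct.ext ?_ ?_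
  · simp [pa_fixedIncl]
  · simp

/-- A left inverse of `peel`, interpreting `(w, x)` as `w x w⁻¹`. -/
def unpeel : WP (peelAct θ) →* WP θ :=
  WP.lift (fun y => SemidirectProduct.inl (fixedIncl θ y.1 * .of y.2.1 * (fixedIncl θ y.1)⁻¹))
    (MonoidHom.noncommCoprod (SemidirectProduct.inl.comp (fixedIncl θ)) SemidirectProduct.inr
      (commute_fixedIncl θ)) fun g y => by
      change _ = (SemidirectProduct.inl (fixedIncl θ g.1) * SemidirectProduct.inr g.2) * _ *
        (SemidirectProduct.inl (fixedIncl θ g.1) * SemidirectProduct.inr g.2)⁻¹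
      rw [WP.conj_inl]
      congr 1
      simp [pa_fixedIncl, mul_assoc]
      rfl

lemma unpeel_peel (g : WP θ) : unpeel θ (peel θ g) = g := by
  have : (unpeel θ).comp (peel θ) = MonoidHom.id _ := by
    apply WP.hom_ext
    · intro x
      by_cases h : Fixed θ x
      · simp [peel, unpeel, h, fixedIncl]
      · simp [peel, unpeel, h, fixedIncl]
    · intro k; simp [peel, unpeel]
  exact DFunLike.congr_fun this g

lemma peel_right (g : WP θ) : (peel θ g).right = (fixedProj θ g, g.right) := by
  have : (SemidirectProduct.rightHom : WP (peelAct θ) →* _).comp (peel θ) =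
      (fixedProj θ).prod SemidirectProduct.rightHom := by
    apply WP.hom_ext
    · intro x
      by_cases h : Fixed θ x
      · simp [peel, h, fixedProj, retr_of h]
      · simp [peel, h, fixedProj, retr_of_not h]; rfl
    · intro k; simp [peel, fixedProj]
  exact DFunLike.congr_fun this g

lemma rootClosed_peelAct (hθ : RootClosed θ) : RootClosed (peelAct θ) := by
  rintro ⟨h, k⟩ ⟨w, x⟩ n hn hx
  simp only [Prod.pow_mk, peelAct_apply, Prod.mk.injEq, mul_eq_right] at hx ⊢
  refine ⟨(pow_eq_one_iff_left hn).1 hx.1, Subtype.ext (hθ k x n hn ?_)⟩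
  exact congrArg Subtype.val hx.2

end Fixed

/-- The alternative holds whenever the action is root-closed and the acting parts commute. If the
projections to the free group on the fixed basis elements form a free pair, so do `a` and `b`.
Otherwise these projections commute, and after peeling off the fixed basis elements the acting parts
still commute but no longer have a common fixed point. -/
theorem good_of_commute_right {X K : Type} [Group K] {θ : K →* Equiv.Perm X}
    (hθ : RootClosed θ) {a b : WP θ} (h : Commute a.right b.right) : Good a b := by
  refine good_of_pullback h fun a b ha hb => ?_
  have hθ := hθ.comp (zhom h)
  generalize θ.comp (zhom h) = θ at *
  rcases good_freeGroup (fixedProj θ a) (fixedProj θ b) with hp | hp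
  · refine Good.of_injective (f := peel θ) (Function.LeftInverse.injective (unpeel_peel θ)) ?_
    refine good_of_no_common_fixed (rootClosed_peelAct θ hθ) ?_ ?_
    · rw [peel_right, peel_right]
      exact Prod.commute_iff.2 ⟨hp, Commute.all _ _⟩
    · rintro ⟨w, x, hx⟩ ⟨h1, h2⟩
      simp only [peel_right, peelAct_apply, Prod.mk.injEq] at h1 h2
      have h1 : θ a.right x = x := congrArg Subtype.val h1.2
      have h2 : θ b.right x = x := congrArg Subtype.val h2.2
      rw [ha] at h1
      rw [hb] at h2
      refine hx fun k => ?_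
      have hk : k = e1 ^ k.1.toAdd * e2 ^ k.2.toAdd := by rw [e_zpow]; rfl
      rw [hk]
      exact fix_mul (fix_zpow h1 _) (fix_zpow h2 _)
  · exact Or.inr (hp.of_map _)

/-! ### Torsion-freeness and the inductive step -/

/-- The powers of `e * a` differ from those of `a` by the product of the translates of `e`. -/
lemma inl_mul_pow {X K : Type} [Group K] {θ : K →* Equiv.Perm X} (a : WP θ) {e : FreeGroup X}
    {N : ℕ} (he : Deep N e) (k : ℕ) : ∃ E : FreeGroup X,
      (SemidirectProduct.inl e * a) ^ k = SemidirectProduct.inl E * a ^ k ∧ Deep N E ∧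
      ∀ l : List X, l ≠ [] → l.length ≤ N →
        mag E l = ∑ i ∈ Finset.range k, mag e (l.map ⇑(θ (a.right ^ i))⁻¹) := by
  induction k with
  | zero => exact ⟨1, by simp, deep_one_elt N, fun l hl _ => by simp [mag_one, unitSeries, hl]⟩
  | succ k ih =>
    obtain ⟨E, h1, h2, h3⟩ := ih
    have hr : (a ^ k).right = a.right ^ k := map_pow (SemidirectProduct.rightHom : WP θ →* K) a k
    refine ⟨E * ((a ^ k).left * pa X (θ (a ^ k).right) e * (a ^ k).left⁻¹), ?_,
      h2.mul ((deep_pa _ he).conj _), fun l hl hn => ?_⟩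
    · rw [pow_succ, h1, map_mul, ← WP.conj_inl, pow_succ]
      simp only [mul_assoc, inv_mul_cancel_left]
    · rw [mag_mul_left h2 _ hl hn, h3 l hl hn, mag_conj (deep_pa _ he) _ hl hn, mag_pa', hr,
        Finset.sum_range_succ]

/-- Roots are unique in `FreeGroup X ⋊ K`. If `(e * a)ⁿ = aⁿ` with `e ≠ 1`, the leading parts of
the translates of `e` by `1, a, …, aⁿ⁻¹` sum to zero. When `a` fixes the letters of a leading word
of `e` this sum is `n` times a nonzero coefficient; otherwise no nonzero power of `a` fixes them, and
`orbit_indep` forbids the relation. -/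
theorem torsionFree_wp {X K : Type} [Group K] [IsMulTorsionFree K] {θ : K →* Equiv.Perm X}
    (hθ : RootClosed θ) : IsMulTorsionFree (WP θ) := by
  refine ⟨fun n hn b a hab => ?_⟩
  change b ^ n = a ^ n at hab
  have hright : b.right = a.right := IsMulTorsionFree.pow_left_injective hn <| by
    have := congrArg (SemidirectProduct.rightHom : WP θ →* K) hab
    rwa [map_pow, map_pow] at this
  have hba := WP.eq_inl (g := b * a⁻¹) (by simp [hright])
  generalize (b * a⁻¹).left = e at hba
  rw [mul_inv_eq_iff_eq_mul] at hba
  by_contra hne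
  have he : e ≠ 1 := fun h => hne (by rw [hba, h, map_one, one_mul])
  obtain ⟨m, hm0, hm, hd⟩ := exists_lead he
  obtain ⟨E, h1, -, h3⟩ := inl_mul_pow a hd n
  have hE : E = 1 := by
    rw [← hba, hab, eq_comm, mul_eq_right] at h1
    exact SemidirectProduct.inl_injective (h1.trans (map_one _).symm)
  have hzero : ∀ l : List X, l ≠ [] → l.length ≤ m.length →
      ∑ i ∈ Finset.range n, mag e (l.map ⇑(θ (a.right ^ i))⁻¹) = 0 := fun l hl hn => by
    rw [← h3 l hl hn, hE, mag_one, unitSeries, if_neg hl]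
  by_cases hs : ∀ x ∈ m, θ a.right x = x
  · have := hzero m hm0 le_rfl
    have hmap : ∀ i : ℕ, m.map ⇑(θ (a.right ^ i))⁻¹ = m := fun i => by
      conv_rhs => rw [← List.map_id m]
      refine List.map_congr_left fun x hx => ?_
      have := fix_zpow (hs x hx) (-(i : ℤ))
      rw [zpow_neg, zpow_natCast, map_inv] at this
      exact this
    simp only [hmap] at this
    simp [hn, hm] at this
  · have hc := orbit_indep (θ.comp (zpowersHom K a.right)) (finHom_mag e) hm ?_
      (∑ i ∈ Finset.range n, Finsupp.single (Multiplicative.ofAdd (i : ℤ)) 1) ?_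
    · have := congrArg (fun c : Multiplicative ℤ →₀ ℤ => c.sum fun _ k => k) hc
      simp only [Finsupp.sum_zero_index] at this
      rw [← Finsupp.sum_finsetSum_index (by simp) (by simp)] at this
      simp [hn] at this
    · intro α hα
      by_contra hα1
      have hα0 : α.toAdd ≠ 0 := fun h => hα1 (Multiplicative.toAdd.injective h)
      exact hs fun x hx => hθ.zpow hα0 (hα x hx)
    · intro l hl
      rw [← Finsupp.sum_finsetSum_index (by simp) (by intros; ring)]
      rw [← hzero l (by rintro rfl; exact hm0 (List.length_eq_zero_iff.1 hl.symm)) hl.le]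
      refine Finset.sum_congr rfl fun i _ => ?_
      rw [Finsupp.sum_single_index (by simp)]
      simp

/-- The property carried through the induction. In Mathlib's `IsMulTorsionFree` roots are unique,
which for nonabelian groups is stronger than the absence of torsion. -/
structure TwoFree (G : Type) [Group G] : Prop where
  torsionFree : IsMulTorsionFree G
  good : ∀ a b : G, Good a b

lemma TwoFree.of_injective {G H : Type} [Group G] [Group H] (h : TwoFree H) {f : G →* H}
    (hf : Function.Injective f) : TwoFree G :=
  ⟨have := h.torsionFree; ⟨fun n hn x y hxy => hf <| IsMulTorsionFree.pow_left_injective hn <| by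
      simpa using congrArg f hxy⟩,
    fun a b => Good.of_injective hf (h.good _ _)⟩

/-- The property passes from `K` to `FreeGroup X ⋊ K` for root-closed actions: a free pair in `K`
lifts, and commuting pairs are the subject of `good_of_commute_right`. -/
theorem TwoFree.wp {X K : Type} [Group K] (h : TwoFree K) {θ : K →* Equiv.Perm X}
    (hθ : RootClosed θ) : TwoFree (WP θ) := by
  have := h.torsionFree
  refine ⟨torsionFree_wp hθ, fun a b => ?_⟩
  rcases h.good a.right b.right with hc | hf
  · exact good_of_commute_right hθ hc
  · exact Or.inr (FreePair.of_map (SemidirectProduct.rightHom : WP θ →* K) hf)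

/-- The action of `K` on the cosets of the image of `ρ`. -/
abbrev cosetAct {K : Type} [Group K] (ρ : K →* K) : K →* Equiv.Perm (K ⧸ ρ.range) :=
  MulAction.toPermHom K (K ⧸ ρ.range)

/-- If `ρ` is a retraction of `K`, its image is closed under roots because `ρ g` and `g` are then
`n`-th roots of the same element; conjugates of the image inherit this. -/
lemma rootClosed_cosetAct {K : Type} [Group K] [IsMulTorsionFree K] {ρ : K →* K}
    (hρ : ∀ g, ρ (ρ g) = ρ g) : RootClosed (cosetAct ρ) := by
  have hmem : ∀ g, g ∈ ρ.range ↔ ρ g = g := fun g =>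
    ⟨by rintro ⟨h, rfl⟩; exact hρ h, fun h => ⟨g, h⟩⟩
  have hfix : ∀ k g : K, cosetAct ρ k (g : K ⧸ ρ.range) = (g : K ⧸ ρ.range) ↔
      ρ (g⁻¹ * k * g) = g⁻¹ * k * g := fun k g => by
    rw [← hmem, eq_comm]
    change ((g : K ⧸ ρ.range) = ((k * g : K) : K ⧸ ρ.range)) ↔ _
    rw [QuotientGroup.eq, mul_assoc]
  intro k x n hn hx
  induction x using QuotientGroup.induction_on with
  | H g =>
  rw [hfix] at hx ⊢
  refine IsMulTorsionFree.pow_left_injective hn ?_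
  have : (g⁻¹ * k * g) ^ n = g⁻¹ * k ^ n * g := by
    simpa using (conj_pow (a := g⁻¹) (b := k) (i := n))
  change ρ (g⁻¹ * k * g) ^ n = (g⁻¹ * k * g) ^ n
  rw [← map_pow, this, hx]

/-! ### Removing one vertex from a right-angled Artin group -/

section Raag

variable {V : Type} (Γ : SimpleGraph V)

lemma commute_raag_of {u v : V} (h : ¬ Γ.Adj u v) : Commute (Raag.of Γ u) (Raag.of Γ v) := by
  by_cases huv : u = v
  · rw [huv]
  rw [← commutatorElement_eq_one_iff_commute]
  exact PresentedGroup.one_of_mem ⟨u, v, huv, h, rfl⟩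

/-- The universal property of a right-angled Artin group. -/
def raagLift {H : Type} [Group H] (f : V → H) (h : ∀ u v, ¬ Γ.Adj u v → Commute (f u) (f v)) :
    Raag Γ →* H :=
  PresentedGroup.toGroup (f := f) <| by
    rintro _ ⟨u, v, -, huv, rfl⟩
    simp [(h u v huv).eq]

@[simp] lemma raagLift_of {H : Type} [Group H] (f : V → H)
    (h : ∀ u v, ¬ Γ.Adj u v → Commute (f u) (f v)) (v : V) :
    raagLift Γ f h (Raag.of Γ v) = f v := PresentedGroup.toGroup.of _

end Raag

section Peel

variable {α : Type} (Γ : SimpleGraph (Option α))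

/-- The retraction of `G(Γ - v)`, for `v = none`, onto the subgroup generated by the vertices not
adjacent to `v`, i.e. commuting with `v`. -/
def killLink : Raag (Γ.comap some) →* Raag (Γ.comap some) :=
  raagLift _ (fun w => if Γ.Adj none (some w) then 1 else Raag.of _ w) fun u v huv => by
    split_ifs
    · exact Commute.one_left _
    · exact Commute.one_left _
    · exact Commute.one_right _
    · exact commute_raag_of _ huv

lemma killLink_idem (g : Raag (Γ.comap some)) : killLink Γ (killLink Γ g) = killLink Γ g := by
  have : (killLink Γ).comp (killLink Γ) = killLink Γ := by
    apply PresentedGroup.ext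
    intro w
    change killLink Γ (killLink Γ (Raag.of _ w)) = killLink Γ (Raag.of _ w)
    by_cases h : Γ.Adj none (some w) <;> simp [killLink, h]
  exact DFunLike.congr_fun this g

/-- The homomorphism from `G(Γ)` to `FreeGroup (B ⧸ C) ⋊ B`, with `B = G(Γ - v)` and `C` the
subgroup of `B` generated by the vertices commuting with `v`; the vertex `v` goes to the trivial
coset. -/
def raagSplit : Raag Γ →* WP (cosetAct (killLink Γ)) :=
  raagLift Γ (fun o => o.elim (SemidirectProduct.inl (.of ((1 : Raag (Γ.comap some)) : _ ⧸ _)))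
    fun w => SemidirectProduct.inr (Raag.of _ w)) <| by
    have key : ∀ w, ¬ Γ.Adj none (some w) →
        Commute (SemidirectProduct.inr (Raag.of _ w) : WP (cosetAct (killLink Γ)))
          (SemidirectProduct.inl (.of ((1 : Raag (Γ.comap some)) : _ ⧸ _))) := by
      intro w hw
      refine mul_inv_eq_iff_eq_mul.1 ?_
      have hfix : cosetAct (killLink Γ) (Raag.of _ w) ((1 : Raag (Γ.comap some)) : _ ⧸ _) =
          ((1 : Raag (Γ.comap some)) : _ ⧸ _) := by
        change (((Raag.of _ w * 1 : Raag (Γ.comap some))) : _ ⧸ (killLink Γ).range) = _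
        rw [eq_comm, QuotientGroup.eq]
        exact ⟨Raag.of _ w, by simp [killLink, hw]⟩
      rw [← map_inv, ← SemidirectProduct.inl_aut]
      change SemidirectProduct.inl (pa _ _ _) = _
      rw [pa_of, hfix]
    rintro (_ | u) (_ | v) huv
    · exact Commute.refl _
    · exact (key v huv).symm
    · exact key u fun h => huv h.symm
    · exact (commute_raag_of (Γ.comap some) huv).map SemidirectProduct.inr

/-- The homomorphism `G(Γ - v) → G(Γ)` given by the inclusion of vertices. -/
def raagIncl : Raag (Γ.comap some) →* Raag Γ :=
  raagLift _ (fun w => Raag.of Γ (some w)) fun _ _ h => commute_raag_of Γ h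

lemma commute_killLink (g : Raag (Γ.comap some)) :
    Commute (Raag.of Γ none) (raagIncl Γ (killLink Γ g)) := by
  have : (MulAut.conj (Raag.of Γ none)).toMonoidHom.comp ((raagIncl Γ).comp (killLink Γ)) =
      (raagIncl Γ).comp (killLink Γ) := by
    apply PresentedGroup.ext
    intro w
    change Raag.of Γ none * raagIncl Γ (killLink Γ (Raag.of _ w)) * (Raag.of Γ none)⁻¹ =
      raagIncl Γ (killLink Γ (Raag.of _ w))
    by_cases h : Γ.Adj none (some w)
    · simp [killLink, h]
    · simp only [killLink, raagLift_of, h, if_false, raagIncl]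
      rw [(commute_raag_of Γ h).eq, mul_inv_cancel_right]
  exact mul_inv_eq_iff_eq_mul.1 (DFunLike.congr_fun this g)

/-- The conjugate of `v` by a representative of a coset of `C`; by `conjOut_mk` the choice is
immaterial, as `v` commutes with `C`. -/
def conjOut (q : Raag (Γ.comap some) ⧸ (killLink Γ).range) : Raag Γ :=
  raagIncl Γ q.out * Raag.of Γ none * (raagIncl Γ q.out)⁻¹

lemma conjOut_mk (g : Raag (Γ.comap some)) :
    conjOut Γ (g : _ ⧸ _) = raagIncl Γ g * Raag.of Γ none * (raagIncl Γ g)⁻¹ := by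
  obtain ⟨⟨_, k, rfl⟩, hk⟩ := QuotientGroup.mk_out_eq_mul (killLink Γ).range g
  rw [conjOut, hk, map_mul, mul_inv_rev]
  have := (commute_killLink Γ k).eq
  rw [mul_assoc (raagIncl Γ g), ← this]
  group

/-- A left inverse of `raagSplit`, sending the coset of `g` to `g v g⁻¹`. -/
def raagUnsplit : WP (cosetAct (killLink Γ)) →* Raag Γ :=
  WP.lift (conjOut Γ) (raagIncl Γ) fun k x => by
    induction x using QuotientGroup.induction_on with
    | H g =>
    change conjOut Γ ((k * g : Raag (Γ.comap some)) : _ ⧸ _) = _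
    rw [conjOut_mk, conjOut_mk, map_mul]
    group

lemma raagSplit_injective : Function.Injective (raagSplit Γ) := by
  have : (raagUnsplit Γ).comp (raagSplit Γ) = MonoidHom.id _ := by
    apply PresentedGroup.ext
    intro v
    change raagUnsplit Γ (raagSplit Γ (Raag.of Γ v)) = Raag.of Γ v
    cases v with
    | none => simp [raagUnsplit, raagSplit, conjOut_mk]
    | some w => simp [raagUnsplit, raagSplit, raagIncl]
  exact Function.LeftInverse.injective (g := raagUnsplit Γ) fun g => DFunLike.congr_fun this g

end Peel

theorem twoFree_raag (V : Type) [Finite V] : ∀ Γ : SimpleGraph V, TwoFree (Raag Γ) := by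
  induction V using Finite.induction_empty_option with
  | of_equiv e h =>
    intro Γ
    let f : Raag Γ →* Raag (Γ.comap e) := raagLift Γ (fun b => Raag.of _ (e.symm b))
      fun u v huv => commute_raag_of _ (by simpa using huv)
    let g : Raag (Γ.comap e) →* Raag Γ := raagLift _ (fun a => Raag.of Γ (e a))
      fun u v huv => commute_raag_of Γ huv
    have hgf : g.comp f = MonoidHom.id _ := by
      apply PresentedGroup.ext
      intro v
      change g (f (Raag.of Γ v)) = Raag.of Γ v
      simp [f, g]
    exact (h (Γ.comap e)).of_injective (f := f)
      (Function.LeftInverse.injective (g := g) fun x => DFunLike.congr_fun hgf x)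
  | h_empty =>
    intro Γ
    have hs : ∀ x : Raag Γ, x = 1 := fun x =>
      DFunLike.congr_fun (f := MonoidHom.id _) (g := 1) (PresentedGroup.ext fun v => v.elim) x
    exact ⟨⟨fun n hn x y _ => (hs x).trans (hs y).symm⟩,
      fun a b => Or.inl (by rw [hs a]; exact Commute.one_left _)⟩
  | h_option h =>
    intro Γ
    have hB := h (Γ.comap some)
    have := hB.torsionFree
    exact (hB.wp (rootClosed_cosetAct (killLink_idem Γ))).of_injective (raagSplit_injective Γ)

lemma closure_pair {G : Type} [Group G] {a b : G} (h : Good a b) :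
    (∀ x y : Subgroup.closure {a, b}, x * y = y * x) ∨
      ∃ ι : Type, Nonempty (Subgroup.closure {a, b} ≃* FreeGroup ι) := by
  rcases h with h | h
  · left
    have : IsMulCommutative (Subgroup.closure {a, b}) := by
      apply Subgroup.isMulCommutative_closure
      rintro x (rfl | rfl) y (rfl | rfl)
      exacts [rfl, h.eq, h.eq.symm, rfl]
    exact fun x y => mul_comm' x y
  · right
    have hr : (pairHom a b).range = Subgroup.closure {a, b} := by
      rw [pairHom, FreeGroup.range_lift_eq_closure]
      congr 1
      ext x
      simp [or_comm, eq_comm]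
    exact ⟨Bool, ⟨((MonoidHom.ofInjective h).trans (MulEquiv.subgroupCongr hr)).symm⟩⟩

end RaagTwo

end

/-- Every two-generated subgroup of a right-angled Artin group `G(Γ)`
(`Γ` a finite simple graph) is either abelian or isomorphic to a free group. -/
theorem two_generated_subgroup_abelian_or_free {V : Type} [Fintype V]
    (Γ : SimpleGraph V) (a b : Raag Γ) :
    (∀ x y : (Subgroup.closure {a, b} : Subgroup (Raag Γ)), x * y = y * x) ∨
    (∃ ι : Type, Nonempty ((Subgroup.closure {a, b} : Subgroup (Raag Γ)) ≃* FreeGroup ι)) :=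
  RaagTwo.closure_pair ((RaagTwo.twoFree_raag V Γ).good a b)
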